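/- arXiv:1911.08924 — 10 statements merged into one kernel-verified Lean document; each statement's English description precedes it below -/
import Mathlib

section
/- For every n ≥ 1 and every balanced coloring c of the 2n collinear points, there exists a non-crossing bichromatic Hamiltonian path drawn on two pages. Precisely: there exist a bijection v : Fin (2n) → Fin (2n) (the order in which the path visits the points) such that c (v i) ≠ c (v (i+1)) for every i < 2n−1, and a page assignment σ : Fin (2n−1) → Bool of the path edges e_i = {v i, v (i+1)} to the halfplanes above/below the line, such that no two edges assigned to the same page interleave. -/
/-- Two edges, given as (unordered) pairs of natural-number indices, interleave
(cross when drawn as circular arcs on the same side of the line):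
with `a < b`, `c < d` the normalized endpoints, `a < c < b < d` or `c < a < d < b`. -/
def Interleaves (p q : ℕ × ℕ) : Prop :=
  (min p.1 p.2 < min q.1 q.2 ∧ min q.1 q.2 < max p.1 p.2 ∧ max p.1 p.2 < max q.1 q.2) ∨
  (min q.1 q.2 < min p.1 p.2 ∧ min p.1 p.2 < max q.1 q.2 ∧ max q.1 q.2 < max p.1 p.2)

/-- A two-page noncrossing bichromatic path on the block `[a, a+m)` from its first to its last point. -/
def GoodBlock (c : ℕ → Bool) (a m : ℕ) : Prop :=
  ∃ v : ℕ → ℕ, ∃ s : ℕ → Bool, v 0 = a ∧ v (m - 1) = a + m - 1 ∧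
    (∀ i, i < m → a ≤ v i ∧ v i < a + m) ∧
    (∀ i j, i < m → j < m → v i = v j → i = j) ∧
    (∀ i, i + 1 < m → c (v i) ≠ c (v (i + 1))) ∧
    (∀ i j, i + 1 < m → j + 1 < m → s i = s j →
      ¬ Interleaves (v i, v (i + 1)) (v j, v (j + 1)))

theorem interleaves_comm (p q : ℕ × ℕ) : Interleaves p q ↔ Interleaves q p := by
  unfold Interleaves; tauto

theorem interleaves_swap (p q r t : ℕ) : Interleaves (p, q) (r, t) ↔ Interleaves (q, p) (t, r) := by
  simp only [Interleaves, min_comm, max_comm]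

theorem goodBlock_two (c : ℕ → Bool) (a : ℕ) (h : c a ≠ c (a + 1)) : GoodBlock c a 2 := by
  refine ⟨fun i => a + i, fun _ => true, rfl, rfl, ?_, ?_, ?_, ?_⟩
  · intro i hi; dsimp only; omega
  · intro i j hi hj hij; dsimp only at hij; omega
  · intro i hi
    obtain rfl : i = 0 := by omega
    exact h
  · intro i j hi hj _ h
    simp only [Interleaves] at h
    omega

theorem goodBlock_concat (c : ℕ → Bool) (a m k : ℕ) (hm : 0 < m) (hk : 0 < k)
    (h1 : GoodBlock c a m) (h2 : GoodBlock c (a + m) k) (hc : c (a + m - 1) ≠ c (a + m)) :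
    GoodBlock c a (m + k) := by
  obtain ⟨v, s, v0, vl, vr, vi, vc, vx⟩ := h1
  obtain ⟨w, t, w0, wl, wr, wi, wc, wx⟩ := h2
  have key : ∀ i, i + 1 < m + k → (i + 1 < m ∨ i + 1 = m ∨ (m ≤ i ∧ i - m + 1 < k)) := by
    intro i hi; omega
  refine ⟨fun i => if i < m then v i else w (i - m), fun i => if i < m then s i else t (i - m),
    by simp [hm, v0], ?_, ?_, ?_, ?_, ?_⟩
  · have h : ¬ (m + k - 1 < m) := by omega
    have h' : m + k - 1 - m = k - 1 := by omega
    simp only [h, if_false, h', wl]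
    omega
  · intro i hi
    dsimp only
    split_ifs with h
    · have := vr i h; omega
    · have := wr (i - m) (by omega); omega
  · intro i j hi hj
    dsimp only
    split_ifs with h h' h'
    · exact vi i j h h'
    · have := vr i h; have := wr (j - m) (by omega); omega
    · have := vr j h'; have := wr (i - m) (by omega); omega
    · intro e
      have := wi (i - m) (j - m) (by omega) (by omega) e
      omega
  · intro i hi
    dsimp only
    rcases key i hi with h | h | h
    · rw [if_pos (by omega), if_pos h]; exact vc i h
    · rw [if_pos (by omega), if_neg (by omega)]
      have e1 : i = m - 1 := by omega
      have e2 : i + 1 - m = 0 := by omega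
      rw [e2, w0, e1, vl]; exact hc
    · rw [if_neg (by omega), if_neg (by omega)]
      have e : i + 1 - m = i - m + 1 := by omega
      rw [e]; exact wc _ h.2
  · -- description of each edge
    have edge : ∀ i, i + 1 < m + k →
        (i + 1 < m ∧ (if i < m then v i else w (i - m)) = v i ∧
          (if i + 1 < m then v (i + 1) else w (i + 1 - m)) = v (i + 1) ∧
          (if i < m then s i else t (i - m)) = s i ∧
          a ≤ v i ∧ v i < a + m ∧ a ≤ v (i + 1) ∧ v (i + 1) < a + m) ∨
        ((if i < m then v i else w (i - m)) = a + m - 1 ∧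
          (if i + 1 < m then v (i + 1) else w (i + 1 - m)) = a + m) ∨
        (i - m + 1 < k ∧ (if i < m then v i else w (i - m)) = w (i - m) ∧
          (if i + 1 < m then v (i + 1) else w (i + 1 - m)) = w (i - m + 1) ∧
          (if i < m then s i else t (i - m)) = t (i - m) ∧
          a + m ≤ w (i - m) ∧ a + m ≤ w (i - m + 1)) := by
      intro i hi
      rcases key i hi with h | h | h
      · left
        have h1 : i < m := by omega
        have := vr i h1
        have := vr (i + 1) h
        simp only [h, h1, if_true, true_and]
        omega
      · right; left
        have e1 : i = m - 1 := by omega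
        have e2 : i + 1 - m = 0 := by omega
        rw [if_pos (by omega), if_neg (by omega), e2, w0, e1, vl]; simp
      · right; right
        have e : i + 1 - m = i - m + 1 := by omega
        have := wr (i - m) (by omega)
        have := wr (i - m + 1) h.2
        rw [if_neg (by omega), if_neg (by omega), if_neg (by omega), e]
        exact ⟨h.2, rfl, rfl, rfl, by omega, by omega⟩
    intro i j hi hj hs
    dsimp only at hs ⊢
    rcases edge i hi with ⟨h, e1, e2, e3, b⟩ | ⟨e1, e2⟩ | ⟨h, e1, e2, e3, b⟩ <;>
    rcases edge j hj with ⟨h', e1', e2', e3', b'⟩ | ⟨e1', e2'⟩ | ⟨h', e1', e2', e3', b'⟩ <;>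
    rw [e1, e2, e1', e2']
    · rw [e3, e3'] at hs; exact vx i j h h' hs
    all_goals try (simp only [Interleaves]; omega)
    · rw [e3, e3'] at hs; exact wx _ _ h h' hs

theorem goodBlock_wrap (c : ℕ → Bool) (a m : ℕ) (hm : 0 < m)
    (h1 : GoodBlock c (a + 1) m) (hc : c a ≠ c (a + m)) (hc' : c (a + 1) ≠ c (a + m + 1)) :
    GoodBlock c a (m + 2) := by
  obtain ⟨v, s, v0, vl, vr, vi, vc, vx⟩ := h1
  obtain ⟨u, hu⟩ : ∃ u : ℕ → ℕ, u = fun i => if i = 0 then a else if i ≤ m then v (m - i)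
      else a + m + 1 := ⟨_, rfl⟩
  obtain ⟨r, hr⟩ : ∃ r : ℕ → Bool, r = fun i => if i = 0 then true else if i < m then s (m - i - 1)
      else false := ⟨_, rfl⟩
  have u0 : u 0 = a := by simp [hu]
  have u1 : u 1 = a + m := by
    have : u 1 = v (m - 1) := by
      simp only [hu]; rw [if_neg (by omega), if_pos (by omega)]
    rw [this, vl]; omega
  have um : u m = a + 1 := by
    simp only [hu]; rw [if_neg (by omega), if_pos le_rfl, Nat.sub_self, v0]
  have ul : u (m + 1) = a + m + 1 := by
    simp only [hu]; rw [if_neg (by omega), if_neg (by omega)]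
  have ui : ∀ i, 0 < i → i ≤ m → u i = v (m - i) := by
    intro i h h'
    simp only [hu]; rw [if_neg (by omega), if_pos h']
  have r0 : r 0 = true := by simp [hr]
  have rm : r m = false := by
    simp only [hr]; rw [if_neg (by omega), if_neg (by omega)]
  have ri : ∀ i, 0 < i → i < m → r i = s (m - i - 1) := by
    intro i h h'
    simp only [hr]; rw [if_neg (by omega), if_pos h']
  have cases3 : ∀ i, i < m + 2 → i = 0 ∨ i = m + 1 ∨ (0 < i ∧ i ≤ m) := by intro i hi; omega
  have ecases : ∀ i, i + 1 < m + 2 → i = 0 ∨ i = m ∨ (0 < i ∧ i < m) := by intro i hi; omega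
  have ur : ∀ i, 0 < i → i ≤ m → a + 1 ≤ u i ∧ u i < a + 1 + m := by
    intro i h h'; rw [ui i h h']; exact vr _ (by omega)
  refine ⟨u, r, u0, ?_, ?_, ?_, ?_, ?_⟩
  · exact ul
  · intro i hi
    rcases cases3 i hi with rfl | rfl | ⟨h, h'⟩
    · omega
    · omega
    · have := ur i h h'; omega
  · intro i j hi hj e
    rcases cases3 i hi with rfl | rfl | ⟨h, h'⟩ <;> rcases cases3 j hj with rfl | rfl | ⟨k, k'⟩
    · rfl
    · omega
    · have := ur j k k'; omega
    · omega
    · rfl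
    · have := ur j k k'; omega
    · have := ur i h h'; omega
    · have := ur i h h'; omega
    · rw [ui i h h', ui j k k'] at e
      have := vi _ _ (by omega) (by omega) e
      omega
  · intro i hi
    rcases ecases i hi with rfl | rfl | ⟨h, h'⟩
    · rw [u0, u1]; exact hc
    · rw [um, ul]; exact hc'
    · rw [ui i h h'.le, ui (i + 1) (by omega) h']
      have := vc (m - (i + 1)) (by omega)
      have e : m - (i + 1) + 1 = m - i := by omega
      rw [e] at this
      exact this.symm
  · intro i j hi hj hs
    rcases ecases i hi with rfl | rfl | ⟨h, h'⟩ <;> rcases ecases j hj with rfl | rfl | ⟨k, k'⟩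
    · simp only [Interleaves]; omega
    · rw [r0, rm] at hs; cases hs
    · have := ur j k k'.le
      have := ur (j + 1) (by omega) k'
      simp only [Interleaves, zero_add]; omega
    · rw [r0, rm] at hs; cases hs
    · simp only [Interleaves]; omega
    · have := ur j k k'.le
      have := ur (j + 1) (by omega) k'
      simp only [Interleaves]; omega
    · have := ur i h h'.le
      have := ur (i + 1) (by omega) h'
      simp only [Interleaves, zero_add]; omega
    · have := ur i h h'.le
      have := ur (i + 1) (by omega) h'
      simp only [Interleaves]; omega
    · rw [ri i h h', ri j k k'] at hs
      have := vx _ _ (by omega) (by omega) hs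
      have e : m - i - 1 + 1 = m - i := by omega
      have e' : m - j - 1 + 1 = m - j := by omega
      rw [e, e', interleaves_swap] at this
      rw [ui i h h'.le, ui (i + 1) (by omega) h', ui j k k'.le, ui (j + 1) (by omega) k']
      exact this

theorem goodBlock_dyck (c : ℕ → Bool) (H : ℕ → ℤ)
    (hH : ∀ x, H (x + 1) = H x + (if c x then 1 else -1)) :
    ∀ m a, 0 < m → H (a + m) = H a → (∀ i, i ≤ m → H a ≤ H (a + i)) → GoodBlock c a m := by
  have up : ∀ x, H x < H (x + 1) → c x = true := by
    intro x h; have := hH x; by_contra hc; simp [hc] at this; omega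
  have down : ∀ x, H (x + 1) < H x → c x = false := by
    intro x h; have := hH x; split_ifs at this with hc
    · omega
    · simpa using hc
  have step : ∀ x, H (x + 1) = H x + 1 ∨ H (x + 1) = H x - 1 := by
    intro x; have := hH x; split_ifs at this <;> omega
  intro m
  induction m using Nat.strong_induction_on with
  | _ m ih =>
  intro a hm he hge
  by_cases hk : ∃ k, 0 < k ∧ k < m ∧ H (a + k) = H a
  · obtain ⟨k, k0, km, hk⟩ := hk
    have h1 : GoodBlock c a k := ih k km a k0 hk (fun i hi => hge i (by omega))
    have h2 : GoodBlock c (a + k) (m - k) := by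
      refine ih (m - k) (by omega) (a + k) (by omega) ?_ ?_
      · rw [hk, ← he]; congr 1; omega
      · intro i hi
        have := hge (k + i) (by omega)
        rw [hk, add_assoc]; exact this
    have h3 := goodBlock_concat c a k (m - k) k0 (by omega) h1 h2 ?_
    · have e : k + (m - k) = m := by omega
      rwa [e] at h3
    · have c1 : c (a + k) = true := by
        apply up
        have := hge (k + 1) (by omega)
        rw [← add_assoc] at this
        rcases step (a + k) with h | h <;> omega
      have c2 : c (a + k - 1) = false := by
        apply down
        have e : a + k - 1 + 1 = a + k := by omega
        have := hge (k - 1) (by omega)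
        have e2 : a + (k - 1) = a + k - 1 := by omega
        rw [e2] at this
        have := step (a + k - 1)
        rw [e] at this ⊢
        omega
      rw [c1, c2]; simp
  · push Not at hk
    have hgt : ∀ i, 0 < i → i < m → H a + 1 ≤ H (a + i) := by
      intro i h h'
      have := hge i h'.le
      have := hk i h h'
      omega
    obtain ⟨p, rfl⟩ : ∃ p, m = p + 2 := by
      refine ⟨m - 2, ?_⟩
      by_contra hne
      obtain rfl : m = 1 := by omega
      have := step a
      omega
    have ca : c a = true := by
      apply up; have := hgt 1 (by omega) (by omega); omega
    have he' : H (a + p + 1 + 1) = H a := he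
    have cl : c (a + p + 1) = false := by
      apply down; have := hgt (p + 1) (by omega) (by omega)
      rw [← add_assoc] at this; omega
    rcases Nat.eq_zero_or_pos p with rfl | hp
    · apply goodBlock_two
      simp only [add_zero] at cl
      rw [ca, cl]; simp
    · have s1 := step a
      have g1 := hgt 1 (by omega) (by omega)
      have g2 := hgt (p + 1) (by omega) (by omega)
      have s2 := step (a + p + 1)
      rw [← add_assoc] at g2
      have g3 := hgt p hp (by omega)
      have s3 := step (a + p)
      apply goodBlock_wrap c a p hp
      · refine ih p (by omega) (a + 1) hp ?_ ?_
        · have e : a + 1 + p = a + p + 1 := by omega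
          rw [e]; omega
        · intro i hi
          have := hgt (1 + i) (by omega) (by omega)
          rw [← add_assoc] at this
          omega
      · have : c (a + p) = false := by apply down; omega
        rw [ca, this]; simp
      · have : c (a + 1) = true := by
          apply up
          have := hgt 2 (by omega) (by omega)
          have e : a + 1 + 1 = a + 2 := rfl
          rw [e]
          have := step (a + 1)
          rw [e] at this
          omega
        rw [cl, this]; simp

theorem interleaves_mod (N a : ℕ) (x y z w x' y' z' w' : ℕ)
    (hx : a ≤ x ∧ x < a + N) (hy : a ≤ y ∧ y < a + N)
    (hz : a ≤ z ∧ z < a + N) (hw : a ≤ w ∧ w < a + N)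
    (ex : x' = x ∧ x < N ∨ x = x' + N) (ey : y' = y ∧ y < N ∨ y = y' + N)
    (ez : z' = z ∧ z < N ∨ z = z' + N) (ew : w' = w ∧ w < N ∨ w = w' + N)
    (h : Interleaves (x', y') (z', w')) : Interleaves (x, y) (z, w) := by
  simp only [Interleaves] at *
  rcases ex with ex | ex <;> rcases ey with ey | ey <;> rcases ez with ez | ez <;>
    rcases ew with ew | ew <;> omega

/-- For every balanced 2-coloring of `2n` collinear points there is a non-crossing
bichromatic Hamiltonian path drawn on two pages. -/
theorem noncrossing_bichromatic_hamiltonian_path_exists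
    (n : ℕ) (hn : 1 ≤ n) (c : Fin (2 * n) → Bool)
    (hbal : (Finset.univ.filter (fun i => c i = true)).card = n) :
    ∃ v : Fin (2 * n) → Fin (2 * n), Function.Bijective v ∧
      (∀ i : Fin (2 * n - 1),
        c (v ⟨i.val, by have := i.isLt; omega⟩) ≠
        c (v ⟨i.val + 1, by have := i.isLt; omega⟩)) ∧
      ∃ σ : Fin (2 * n - 1) → Bool,
        ∀ i j : Fin (2 * n - 1), σ i = σ j →
          ¬ Interleaves
              (((v ⟨i.val, by have := i.isLt; omega⟩) : ℕ),
               ((v ⟨i.val + 1, by have := i.isLt; omega⟩) : ℕ))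
              (((v ⟨j.val, by have := j.isLt; omega⟩) : ℕ),
               ((v ⟨j.val + 1, by have := j.isLt; omega⟩) : ℕ)) := by

  obtain ⟨N, hN⟩ : ∃ N, N = 2 * n := ⟨_, rfl⟩
  have hN0 : 0 < 2 * n := by omega
  obtain ⟨d, hd⟩ : ∃ d : ℕ → Bool, d = fun x => c ⟨x % (2 * n), Nat.mod_lt _ hN0⟩ := ⟨_, rfl⟩
  obtain ⟨H, hHd⟩ : ∃ H : ℕ → ℤ, H = fun x => ∑ i ∈ Finset.range x, (if d i then (1 : ℤ) else -1) :=
    ⟨_, rfl⟩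
  have hH : ∀ x, H (x + 1) = H x + (if d x then 1 else -1) := by
    intro x; simp only [hHd]; rw [Finset.sum_range_succ]
  have H0 : H 0 = 0 := by simp [hHd]
  have HN : H (2 * n) = 0 := by
    simp only [hHd]
    rw [Finset.sum_range]
    have : ∀ i : Fin (2 * n), d i = c i := by
      intro i; simp [hd, Nat.mod_eq_of_lt i.isLt]
    simp only [this]
    have e : ∀ i : Fin (2 * n), (if c i = true then (1 : ℤ) else -1)
        = 2 * (if c i = true then (1 : ℤ) else 0) - 1 := by
      intro i; split_ifs <;> norm_num
    simp only [e]
    rw [Finset.sum_sub_distrib, ← Finset.mul_sum, Finset.sum_boole, hbal]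
    simp
  have Hper : ∀ x, H (x + 2 * n) = H x := by
    intro x
    induction x with
    | zero => rw [zero_add, HN, H0]
    | succ x ih =>
      have e : x + 1 + 2 * n = x + 2 * n + 1 := by omega
      have e2 : d (x + 2 * n) = d x := by simp [hd]
      rw [e, hH, hH, ih, e2]
  obtain ⟨a, ha, hmin⟩ := Finset.exists_min_image (Finset.range (2 * n)) H ⟨0, by simpa using hN0⟩
  rw [Finset.mem_range] at ha
  have hgood := goodBlock_dyck d H hH (2 * n) a hN0 (Hper a) (by
    intro i hi
    by_cases h : a + i < 2 * n
    · exact hmin _ (Finset.mem_range.2 h)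
    · have e : a + i = (a + i - 2 * n) + 2 * n := by omega
      rw [e, Hper]
      exact hmin _ (Finset.mem_range.2 (by omega)))
  obtain ⟨v, s, v0, vl, vr, vi, vc, vx⟩ := hgood
  have hmod : ∀ i, i < 2 * n →
      (v i % (2 * n) = v i ∧ v i < 2 * n) ∨ v i = v i % (2 * n) + 2 * n := by
    intro i hi
    have := vr i hi
    by_cases h : v i < 2 * n
    · left; exact ⟨Nat.mod_eq_of_lt h, h⟩
    · right
      rw [Nat.mod_eq_sub_mod (by omega), Nat.mod_eq_of_lt (by omega)]; omega
  refine ⟨fun i => ⟨v i % (2 * n), Nat.mod_lt _ hN0⟩, ?_, ?_, fun i => s i, ?_⟩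
  · rw [← Finite.injective_iff_bijective]
    intro i j hij
    have hij' : v i % (2 * n) = v j % (2 * n) := by simpa using hij
    have h1 := hmod i i.isLt
    have h2 := hmod j j.isLt
    have h3 := vr i i.isLt
    have h4 := vr j j.isLt
    apply Fin.ext
    apply vi i j i.isLt j.isLt
    rw [hij'] at h1
    omega
  · intro i
    have := vc i (by have := i.isLt; omega)
    simpa [hd] using this
  · intro i j hs h
    have hi := i.isLt
    have hj := j.isLt
    exact vx i j (by omega) (by omega) hs
      (interleaves_mod (2 * n) a _ _ _ _ _ _ _ _ (vr _ (by omega)) (vr _ (by omega))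
        (vr _ (by omega)) (vr _ (by omega)) (hmod _ (by omega)) (hmod _ (by omega))
        (hmod _ (by omega)) (hmod _ (by omega)) h)
end

section
/- For every n ≥ 1 and every balanced coloring c of the 2n collinear points, there exists a non-crossing bichromatic Hamiltonian path drawn on two pages one of whose endpoints is the leftmost point. Precisely: there exist a bijection v : Fin (2n) → Fin (2n) with v 0 = 0 (the path starts at the leftmost point) and c (v i) ≠ c (v (i+1)) for every i < 2n−1, and a page assignment σ : Fin (2n−1) → Bool of the path edges e_i = {v i, v (i+1)} such that no two edges assigned to the same page interleave. -/
/-- Edges of a path whose vertices carry the page of the edge to the next vertex. -/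
def pathEdges : List (ℕ × Bool) → List (ℕ × ℕ × Bool)
  | [] => []
  | [_] => []
  | a :: b :: l => (a.1, b.1, a.2) :: pathEdges (b :: l)

/-- `v` is strictly covered by the edge `e`. -/
def Covers (e : ℕ × ℕ × Bool) (v : ℕ) : Prop :=
  (e.1 < v ∧ v < e.2.1) ∨ (e.2.1 < v ∧ v < e.1)

/-- `v` is visible from the right on page `s`. -/
def Vis (Q : List (ℕ × Bool)) (s : Bool) (v : ℕ) : Prop :=
  ∀ e ∈ pathEdges Q, e.2.2 = s → ¬ Covers e v

/-- No two edges on the same page cross. -/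
def NonCr (Q : List (ℕ × Bool)) : Prop :=
  ∀ e ∈ pathEdges Q, ∀ f ∈ pathEdges Q, e.2.2 = f.2.2 →
    ¬ Interleaves (e.1, e.2.1) (f.1, f.2.1)

/-- Consecutive vertices have different colors. -/
def Alt (C : ℕ → Bool) (Q : List (ℕ × Bool)) : Prop :=
  ∀ e ∈ pathEdges Q, C e.1 ≠ C e.2.1

theorem mem_pathEdges_cons {a : ℕ × Bool} {Q : List (ℕ × Bool)} {e : ℕ × ℕ × Bool} :
    e ∈ pathEdges (a :: Q) ↔ (∃ q ∈ Q.head?, e = (a.1, q.1, a.2)) ∨ e ∈ pathEdges Q := by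
  cases Q with
  | nil => simp [pathEdges]
  | cons b l => simp [pathEdges]

theorem mem_of_pathEdges {Q : List (ℕ × Bool)} {e : ℕ × ℕ × Bool} (h : e ∈ pathEdges Q) :
    e.1 ∈ Q.map Prod.fst ∧ e.2.1 ∈ Q.map Prod.fst := by
  induction Q with
  | nil => simp [pathEdges] at h
  | cons a l ih =>
    rcases mem_pathEdges_cons.1 h with ⟨q, hq, rfl⟩ | h
    · refine ⟨by simp, ?_⟩
      have := List.mem_of_mem_head? hq
      exact List.mem_map.2 ⟨q, by simp [this], rfl⟩
    · have := ih h
      exact ⟨List.mem_cons_of_mem _ this.1, List.mem_cons_of_mem _ this.2⟩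

theorem getElem_pathEdges (Q : List (ℕ × Bool)) (i : ℕ) (h : i + 1 < Q.length) :
    ((Q[i]).1, (Q[i+1]).1, (Q[i]).2) ∈ pathEdges Q := by
  induction Q generalizing i with
  | nil => simp at h
  | cons a l ih =>
    cases i with
    | zero =>
      cases l with
      | nil => simp at h
      | cons b l => simp [pathEdges]
    | succ i =>
      apply mem_pathEdges_cons.2
      right
      simpa using ih i (by simpa using h)

theorem interleaves_symm {p q : ℕ × ℕ} (h : Interleaves p q) : Interleaves q p := by
  unfold Interleaves at *; tauto

/-- Adding an edge from an outer point (`x` beyond all endpoints, or below all) to a visible head. -/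
theorem NonCr.cons {Q : List (ℕ × Bool)} {x : ℕ} {A : Bool} (h : NonCr Q)
    (hx : ∀ q ∈ Q.head?, ∀ e ∈ pathEdges Q, e.2.2 = A →
      ¬ Interleaves (x, q.1) (e.1, e.2.1)) : NonCr ((x, A) :: Q) := by
  intro e he f hf hef
  rcases mem_pathEdges_cons.1 he with ⟨q, hq, rfl⟩ | he <;>
  rcases mem_pathEdges_cons.1 hf with ⟨q', hq', rfl⟩ | hf
  · have : q = q' := by rw [Option.mem_def] at hq hq'; rw [hq] at hq'; simpa using hq'
    subst this
    unfold Interleaves; omega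
  · exact hx q hq f hf hef.symm
  · exact fun hi => hx q' hq' e he hef (interleaves_symm hi)
  · exact h e he f hf hef

theorem Alt.cons {C : ℕ → Bool} {Q : List (ℕ × Bool)} {x : ℕ × Bool} (h : Alt C Q)
    (hx : ∀ q ∈ Q.head?, C x.1 ≠ C q.1) : Alt C (x :: Q) := by
  intro e he
  rcases mem_pathEdges_cons.1 he with ⟨q, hq, rfl⟩ | he
  · exact hx q hq
  · exact h e he

theorem Vis.cons {Q : List (ℕ × Bool)} {a : ℕ × Bool} {s : Bool} {v : ℕ} (h : Vis Q s v)
    (hx : ∀ q ∈ Q.head?, a.2 = s → ¬ Covers (a.1, q.1, a.2) v) : Vis (a :: Q) s v := by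
  intro e he
  rcases mem_pathEdges_cons.1 he with ⟨q, hq, rfl⟩ | he
  · exact hx q hq
  · exact h e he

/-- The invariant of the left-to-right scan. -/
structure ScanInv (C : ℕ → Bool) (r : Bool) (m : ℕ) (Q : List (ℕ × Bool)) (P : List ℕ)
    (d : Bool) : Prop where
  nodup : (Q.map Prod.fst ++ P).Nodup
  mem : ∀ v, v ∈ Q.map Prod.fst ++ P ↔ 1 ≤ v ∧ v ≤ m
  sorted : P.Pairwise (· > ·)
  alt : Alt C Q
  noncr : NonCr Q
  colP : ∀ p ∈ P, C p = d
  colQ : ∀ q ∈ Q.head?, C q.1 = d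
  ht : (∑ i ∈ Finset.range m, (if C (i + 1) = r then (1 : ℤ) else -1)) =
    if d = r then (P.length : ℤ) else -(P.length + 1)
  visP : ∀ p ∈ P, ∃ s, Vis Q s p
  visQ : ∃ s, ∀ q ∈ Q.head?, Vis Q s q.1
  visR : ∀ q ∈ Q.head?, ∀ p ∈ P, q.1 < p → ∀ s, Vis Q s p

theorem scan_step {C : ℕ → Bool} {r : Bool} {m : ℕ} {Q : List (ℕ × Bool)} {P : List ℕ}
    {d : Bool} (h : ScanInv C r m Q P d) :
    ∃ Q' P' d', ScanInv C r (m + 1) Q' P' d' := by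
  have hQle : ∀ v ∈ Q.map Prod.fst, 1 ≤ v ∧ v ≤ m := fun v hv =>
    (h.mem v).1 (List.mem_append_left _ hv)
  have hPle : ∀ v ∈ P, 1 ≤ v ∧ v ≤ m := fun v hv =>
    (h.mem v).1 (List.mem_append_right _ hv)
  have hhead : ∀ q ∈ Q.head?, q.1 ∈ Q.map Prod.fst := fun q hq =>
    List.mem_map.2 ⟨q, List.mem_of_mem_head? hq, rfl⟩
  have hE : ∀ e ∈ pathEdges Q, e.1 ≤ m ∧ e.2.1 ≤ m := fun e he =>
    ⟨(hQle _ (mem_of_pathEdges he).1).2, (hQle _ (mem_of_pathEdges he).2).2⟩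
  have hxn : m + 1 ∉ Q.map Prod.fst ++ P := fun hx => by
    have := (h.mem _).1 hx; omega
  have hvx : ∀ s, Vis Q s (m + 1) := by
    intro s e he _ hc
    have := hE e he
    unfold Covers at hc; omega
  by_cases hc : C (m + 1) = d
  · refine ⟨Q, (m + 1) :: P, d, ?_⟩
    refine ⟨?_, ?_, ?_, h.alt, h.noncr, ?_, h.colQ, ?_, ?_, h.visQ, ?_⟩
    · exact (List.perm_middle.nodup_iff).2 (List.nodup_cons.2 ⟨hxn, h.nodup⟩)
    · intro v
      rw [List.perm_middle.mem_iff, List.mem_cons, h.mem]; omega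
    · exact List.pairwise_cons.2 ⟨fun p hp => by have := hPle p hp; omega, h.sorted⟩
    · intro p hp
      rcases List.mem_cons.1 hp with rfl | hp
      · exact hc
      · exact h.colP p hp
    · rw [Finset.sum_range_succ, h.ht, hc]
      split_ifs <;> simp <;> ring
    · intro p hp
      rcases List.mem_cons.1 hp with rfl | hp
      · exact ⟨true, hvx _⟩
      · exact h.visP p hp
    · intro q hq p hp hlt
      rcases List.mem_cons.1 hp with rfl | hp
      · exact hvx
      · exact h.visR q hq p hp hlt
  · obtain ⟨A, hA⟩ := h.visQ
    have hnc : NonCr ((m + 1, A) :: Q) := by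
      apply h.noncr.cons
      intro q hq e he hes hi
      have h1 := hE e he
      have h2 := hQle _ (hhead q hq)
      have h3 := hA q hq e he hes
      unfold Covers at h3; unfold Interleaves at hi
      simp only at hi
      omega
    have halt : Alt C ((m + 1, A) :: Q) := by
      apply h.alt.cons
      intro q hq
      rw [h.colQ q hq]; exact hc
    cases P with
    | nil =>
      refine ⟨(m + 1, A) :: Q, [], !d, ?_⟩
      refine ⟨?_, ?_, by simp, halt, hnc, by simp, ?_, ?_, by simp, ?_, by simp⟩
      · exact List.nodup_cons.2 ⟨hxn, h.nodup⟩
      · intro v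
        have := h.mem v
        rw [List.map_cons, List.cons_append, List.mem_cons, this]
        simp only; omega
      · intro q hq
        simp at hq
        subst hq
        simp only
        revert hc
        cases C (m+1) <;> cases d <;> simp
      · rw [Finset.sum_range_succ, h.ht]
        revert hc
        cases C (m+1) <;> cases d <;> cases r <;> simp
      · refine ⟨A, ?_⟩
        intro q hq
        simp at hq
        subst hq
        apply (hvx A).cons
        intro q hq _ hcov
        have := hQle _ (hhead q hq)
        unfold Covers at hcov; simp only at hcov; omega
    | cons p P =>
      have hpm := hPle p (by simp)
      have hPp : ∀ p' ∈ P, p' < p := (List.pairwise_cons.1 h.sorted).1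
      -- visibility after adding the edge from the new point to the old head
      have key : ∀ p' ∈ p :: P, ∃ s, Vis ((m + 1, A) :: Q) s p' := by
        intro p' hp'
        by_cases hq : ∃ q ∈ Q.head?, q.1 < p'
        · obtain ⟨q, hq, hlt⟩ := hq
          refine ⟨!A, (h.visR q hq p' hp' hlt _).cons ?_⟩
          intro q' _ hh
          cases A <;> simp at hh
        · obtain ⟨s, hs⟩ := h.visP p' hp'
          refine ⟨s, hs.cons ?_⟩
          intro q hq' _ hcov
          have : ¬ q.1 < p' := fun hl => hq ⟨q, hq', hl⟩
          have := hPle p' hp'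
          unfold Covers at hcov; simp only at hcov; omega
      obtain ⟨B, hB⟩ := key p (by simp)
      have hE' : ∀ e ∈ pathEdges ((m + 1, A) :: Q), e.1 ≤ m + 1 ∧ e.2.1 ≤ m + 1 := by
        intro e he
        rcases mem_pathEdges_cons.1 he with ⟨q, hq, rfl⟩ | he
        · have := hQle _ (hhead q hq)
          simp only; omega
        · have := hE e he; omega
      have hperm : (((p, B) :: (m + 1, A) :: Q).map Prod.fst ++ P).Perm
          ((m + 1) :: (Q.map Prod.fst ++ p :: P)) := by
        simp only [List.map_cons, List.cons_append]
        exact (List.Perm.swap _ _ _).trans (List.Perm.cons _ List.perm_middle.symm)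
      refine ⟨(p, B) :: (m + 1, A) :: Q, P, d, ?_⟩
      refine ⟨?_, ?_, (List.pairwise_cons.1 h.sorted).2, ?_, ?_, ?_, ?_, ?_, ?_, ?_, ?_⟩
      · exact hperm.nodup_iff.2 (List.nodup_cons.2 ⟨hxn, h.nodup⟩)
      · intro v
        rw [hperm.mem_iff, List.mem_cons, h.mem]; omega
      · apply halt.cons
        intro q hq
        simp at hq
        subst hq
        have := h.colP p (by simp)
        simp only
        rw [this]; exact fun hh => hc hh.symm
      · apply hnc.cons
        intro q hq e he hes hi
        simp at hq
        subst hq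
        have h1 := hE' e he
        have h3 := hB e he hes
        unfold Covers at h3; unfold Interleaves at hi
        simp only at hi
        omega
      · exact fun p' hp' => h.colP p' (by simp [hp'])
      · intro q hq
        simp at hq
        subst hq
        exact h.colP p (by simp)
      · rw [Finset.sum_range_succ, h.ht]
        revert hc
        cases C (m+1) <;> cases d <;> cases r <;> simp
      · intro p' hp'
        obtain ⟨s, hs⟩ := key p' (by simp [hp'])
        refine ⟨s, hs.cons ?_⟩
        intro q hq _ hcov
        simp at hq
        subst hq
        have := hPp p' hp'
        unfold Covers at hcov; simp only at hcov; omega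
      · refine ⟨B, ?_⟩
        intro q hq
        simp at hq
        subst hq
        apply hB.cons
        intro q hq _ hcov
        unfold Covers at hcov; simp only at hcov; omega
      · intro q hq p' hp' hlt
        simp at hq
        subst hq
        have := hPp p' hp'
        simp only at hlt; omega

theorem scan_exists (C : ℕ → Bool) (r : Bool) (m : ℕ) :
    ∃ Q P d, ScanInv C r m Q P d := by
  induction m with
  | zero =>
    refine ⟨[], [], r, ?_⟩
    constructor <;> simp [Alt, NonCr, pathEdges]
    intro v; omega
  | succ m ih =>
    obtain ⟨Q, P, d, h⟩ := ih
    exact scan_step h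

theorem path_exists (C : ℕ → Bool) (m : ℕ)
    (hs : (∑ i ∈ Finset.range m, (if C (i + 1) = C 0 then (1 : ℤ) else -1)) = -1) :
    ∃ Q : List (ℕ × Bool), (Q.map Prod.fst).Nodup ∧ (∀ v, v ∈ Q.map Prod.fst ↔ v ≤ m) ∧
      (∃ A Q', Q = (0, A) :: Q') ∧ Alt C Q ∧ NonCr Q := by
  obtain ⟨Q, P, d, h⟩ := scan_exists C (C 0) m
  have hht := h.ht
  rw [hs] at hht
  have hd : d ≠ C 0 := by
    rintro rfl
    simp at hht
  have hP : P = [] := by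
    rw [if_neg hd] at hht
    apply List.length_eq_zero_iff.1
    omega
  subst hP
  have hmem : ∀ v, v ∈ Q.map Prod.fst ↔ 1 ≤ v ∧ v ≤ m := by simpa using h.mem
  obtain ⟨A, hA⟩ := h.visQ
  refine ⟨(0, A) :: Q, ?_, ?_, ⟨A, Q, rfl⟩, ?_, ?_⟩
  · refine List.nodup_cons.2 ⟨fun h0 => ?_, by simpa using h.nodup⟩
    have := (hmem _).1 h0
    simp at this
  · intro v
    rw [List.map_cons, List.mem_cons, hmem]
    simp only; omega
  · apply h.alt.cons
    intro q hq
    rw [h.colQ q hq]; exact fun hh => hd hh.symm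
  · apply h.noncr.cons
    intro q hq e he hes hi
    have h3 := hA q hq e he hes
    unfold Covers at h3; unfold Interleaves at hi
    simp only at hi
    omega

/-- For every balanced 2-coloring of `2n` collinear points there is a non-crossing
bichromatic Hamiltonian path drawn on two pages. -/
theorem noncrossing_bichromatic_hamiltonian_path_from_leftmost_exists
    (n : ℕ) (hn : 1 ≤ n) (c : Fin (2 * n) → Bool)
    (hbal : (Finset.univ.filter (fun i => c i = true)).card = n) :
    ∃ v : Fin (2 * n) → Fin (2 * n), Function.Bijective v ∧
      v ⟨0, by omega⟩ = ⟨0, by omega⟩ ∧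
      (∀ i : Fin (2 * n - 1),
        c (v ⟨i.val, by have := i.isLt; omega⟩) ≠
        c (v ⟨i.val + 1, by have := i.isLt; omega⟩)) ∧
      ∃ σ : Fin (2 * n - 1) → Bool,
        ∀ i j : Fin (2 * n - 1), σ i = σ j →
          ¬ Interleaves
              (((v ⟨i.val, by have := i.isLt; omega⟩) : ℕ),
               ((v ⟨i.val + 1, by have := i.isLt; omega⟩) : ℕ))
              (((v ⟨j.val, by have := j.isLt; omega⟩) : ℕ),
               ((v ⟨j.val + 1, by have := j.isLt; omega⟩) : ℕ)) := by
  classical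
  set C : ℕ → Bool := fun k => if h : k < 2 * n then c ⟨k, h⟩ else false with hC
  have hCf : ∀ i : Fin (2 * n), C i.val = c i := fun i => by simp [hC]
  have hsum : (∑ i ∈ Finset.range (2 * n - 1),
      (if C (i + 1) = C 0 then (1 : ℤ) else -1)) = -1 := by
    have h1 : (∑ i ∈ Finset.range (2 * n - 1 + 1),
        (if C i = C 0 then (1 : ℤ) else -1)) = 0 := by
      rw [show 2 * n - 1 + 1 = 2 * n by omega, Finset.sum_range]
      simp only [hCf]
      have h2 : (∑ i : Fin (2 * n), (if c i = true then (1 : ℤ) else -1)) = 0 := by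
        have h3 : ∀ i : Fin (2 * n), (if c i = true then (1 : ℤ) else -1) =
            2 * (if c i = true then (1 : ℤ) else 0) - 1 := by
          intro i; split_ifs <;> norm_num
        rw [Finset.sum_congr rfl (fun i _ => h3 i), Finset.sum_sub_distrib, ← Finset.mul_sum,
          Finset.sum_boole, hbal]
        simp
      cases C 0 with
      | true => exact h2
      | false =>
        rw [← neg_eq_zero, ← Finset.sum_neg_distrib, ← h2]
        apply Finset.sum_congr rfl
        intro i _
        cases c i <;> simp
    rw [Finset.sum_range_succ'] at h1
    simp at h1 ⊢
    omega
  obtain ⟨Q, hnd, hmem, ⟨A, Q', hQ'⟩, halt, hnc⟩ := path_exists C (2 * n - 1) hsum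
  have hlen : Q.length = 2 * n := by
    have h1 : (Q.map Prod.fst).toFinset = Finset.range (2 * n) := by
      ext v
      rw [List.mem_toFinset, hmem, Finset.mem_range]; omega
    have h2 := List.toFinset_card_of_nodup hnd
    rw [h1] at h2
    simpa using h2.symm
  have hlt : ∀ (i : ℕ) (hi : i < Q.length), (Q[i]).1 < 2 * n := by
    intro i hi
    have := (hmem (Q[i]).1).1 (List.mem_map.2 ⟨Q[i], List.getElem_mem hi, rfl⟩)
    omega
  refine ⟨fun i => ⟨(Q[i.val]'(by rw [hlen]; exact i.isLt)).1, hlt _ _⟩, ?_, ?_, ?_,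
    fun i => (Q[i.val]'(by have := i.isLt; omega)).2, ?_⟩
  · apply Finite.injective_iff_bijective.1
    intro i j hij
    simp only [Fin.mk.injEq] at hij
    have hi : i.val < (Q.map Prod.fst).length := by simp [hlen]
    have hj : j.val < (Q.map Prod.fst).length := by simp [hlen]
    apply Fin.ext
    apply (hnd.getElem_inj_iff (hi := hi) (hj := hj)).1
    simpa using hij
  · simp [hQ']
  · intro i
    have := halt _ (getElem_pathEdges Q i.val (by have := i.isLt; omega))
    rw [← hCf, ← hCf]
    exact this
  · intro i j hij
    exact hnc _ (getElem_pathEdges Q i.val (by have := i.isLt; omega))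
      _ (getElem_pathEdges Q j.val (by have := j.isLt; omega)) hij
end

section
/- For every n ≥ 1 and every balanced coloring c of the 2n collinear points, there exists a non-crossing perfect bichromatic matching: a partition M of Fin (2n) into n pairs such that every pair of M contains one red and one blue point and no two pairs of M interleave (any two pairs are nested or disjoint). -/
theorem exists_consecutive {m : ℕ} (c : Fin m → Bool) (S : Finset (Fin m))
    (x y : Fin m) (hx : x ∈ S) (hy : y ∈ S) (hxy : c x ≠ c y) :
    ∃ a ∈ S, ∃ b ∈ S, a < b ∧ c a ≠ c b ∧ ∀ k ∈ S, ¬ (a < k ∧ k < b) := by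
  classical
  let T := (S ×ˢ S).filter (fun p => p.1 < p.2 ∧ c p.1 ≠ c p.2)
  have hT : T.Nonempty := by
    rcases lt_trichotomy x y with h | h | h
    · exact ⟨(x, y), by simp [T, hx, hy, h, hxy]⟩
    · exact absurd (by rw [h]) hxy
    · exact ⟨(y, x), by simp [T, hx, hy, h, hxy.symm]⟩
  obtain ⟨⟨a, b⟩, hp, hmin⟩ := Finset.exists_min_image T (fun p => (p.2 : ℕ) - (p.1 : ℕ)) hT
  simp only [T, Finset.mem_filter, Finset.mem_product] at hp hmin
  obtain ⟨⟨ha, hb⟩, hab, hc⟩ := hp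
  refine ⟨a, ha, b, hb, hab, hc, ?_⟩
  rintro k hk ⟨h1, h2⟩
  by_cases h : c a = c k
  · have := hmin (k, b) ⟨⟨hk, hb⟩, h2, by rw [← h]; exact hc⟩
    simp only at this
    omega
  · have := hmin (a, k) ⟨⟨ha, hk⟩, h1, h⟩
    simp only at this
    omega

theorem exists_pairing {m : ℕ} (c : Fin m → Bool) (n : ℕ) : ∀ (S : Finset (Fin m)),
    (S.filter (fun i => c i = true)).card = n → (S.filter (fun i => c i = false)).card = n →
    ∃ σ : Fin m → Fin m, (∀ i ∈ S, σ i ∈ S ∧ σ (σ i) = i ∧ c (σ i) ≠ c i) ∧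
      ∀ i ∈ S, ∀ j ∈ S, ¬ (i < j ∧ j < σ i ∧ σ i < σ j) := by
  classical
  induction n with
  | zero =>
    intro S h1 h2
    have hS : ∀ i, i ∉ S := by
      intro i hi
      rw [Finset.card_eq_zero, Finset.filter_eq_empty_iff] at h1 h2
      have := h1 hi
      have := h2 hi
      simp_all
    exact ⟨id, fun i hi => absurd hi (hS i), fun i hi => absurd hi (hS i)⟩
  | succ n ih =>
    intro S h1 h2
    obtain ⟨x, hx⟩ := Finset.card_pos.mp (by omega : 0 < (S.filter (fun i => c i = true)).card)
    obtain ⟨y, hy⟩ := Finset.card_pos.mp (by omega : 0 < (S.filter (fun i => c i = false)).card)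
    rw [Finset.mem_filter] at hx hy
    obtain ⟨a, ha, b, hb, hab, hc, hk⟩ :=
      exists_consecutive c S x y hx.1 hy.1 (by rw [hx.2, hy.2]; simp)
    have key : ∀ v : Bool, (S.filter (fun i => c i = v)).card = n + 1 →
        (((S.erase a).erase b).filter (fun i => c i = v)).card = n := by
      intro v hv
      by_cases hav : c a = v
      · have : ((S.erase a).erase b).filter (fun i => c i = v)
            = (S.filter (fun i => c i = v)).erase a := by
          ext i
          simp only [Finset.mem_filter, Finset.mem_erase]
          grind
        rw [this, Finset.card_erase_of_mem (by simp [ha, hav]), hv]; rfl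
      · have hbv : c b = v := by
          revert hc hav; cases c a <;> cases c b <;> cases v <;> simp
        have : ((S.erase a).erase b).filter (fun i => c i = v)
            = (S.filter (fun i => c i = v)).erase b := by
          ext i
          simp only [Finset.mem_filter, Finset.mem_erase]
          grind
        rw [this, Finset.card_erase_of_mem (by simp [hb, hbv]), hv]; rfl
    obtain ⟨σ, hσ, hcr⟩ := ih _ (key _ h1) (key _ h2)
    have hσ' : ∀ i ∈ S, i ≠ a → i ≠ b →
        σ i ∈ S ∧ σ i ≠ a ∧ σ i ≠ b ∧ σ (σ i) = i ∧ c (σ i) ≠ c i := by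
      intro i hi h1 h2
      have := hσ i (by simp [hi, h1, h2])
      simp only [Finset.mem_erase] at this
      tauto
    refine ⟨fun i => if i = a then b else if i = b then a else σ i, ?_, ?_⟩
    · intro i hi
      have := hσ' i hi
      grind
    · intro i hi j hj
      have h1 := hσ' i hi
      have h2 := hσ' j hj
      have h3 : i ≠ a → i ≠ b → j ≠ a → j ≠ b → _ := fun p q r s =>
        hcr i (by simp [hi, p, q]) j (by simp [hj, r, s])
      have h4 := hk j hj
      have h5 := hk (σ i)
      rintro ⟨p, q, r⟩
      simp only at q r
      grind

/-- For every balanced 2-coloring of `2n` collinear points there exists a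
non-crossing perfect bichromatic matching: a partition of `Fin (2n)` into `n`
bichromatic pairs, no two of which interleave. -/
theorem noncrossing_perfect_bichromatic_matching_exists
    (n : ℕ) (hn : 1 ≤ n) (c : Fin (2 * n) → Bool)
    (hbal : (Finset.univ.filter (fun i => c i = true)).card = n) :
    ∃ M : Finset (Finset (Fin (2 * n))),
      M.card = n ∧
      (∀ e ∈ M, e.card = 2) ∧
      (∀ e ∈ M, ∀ f ∈ M, e ≠ f → Disjoint e f) ∧
      (∀ i : Fin (2 * n), ∃ e ∈ M, i ∈ e) ∧
      (∀ e ∈ M, ∀ a b : Fin (2 * n), e = {a, b} → a ≠ b → c a ≠ c b) ∧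
      (∀ e ∈ M, ∀ f ∈ M, ∀ a b a' b' : Fin (2 * n), e = {a, b} → f = {a', b'} →
        ¬ Interleaves ((a : ℕ), (b : ℕ)) ((a' : ℕ), (b' : ℕ))) := by
  classical
  have hf : (Finset.univ.filter (fun i => c i = false)).card = n := by
    have := Finset.card_filter_add_card_filter_not (s := Finset.univ) (fun i => c i = true)
    simp only [Bool.not_eq_true, Finset.card_univ, Fintype.card_fin] at this
    omega
  obtain ⟨σ, hσ, hcr⟩ := exists_pairing c n Finset.univ hbal hf
  simp only [Finset.mem_univ, true_and, forall_const] at hσ hcr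
  have hne : ∀ i, i ≠ σ i := fun i h => (hσ i).2 (by rw [← h])
  let M : Finset (Finset (Fin (2 * n))) := Finset.univ.image (fun i => {i, σ i})
  have hM : ∀ e ∈ M, ∃ i, {i, σ i} = e := by
    intro e he
    simpa [M] using he
  have h2 : ∀ e ∈ M, e.card = 2 := by
    intro e he
    obtain ⟨i, rfl⟩ := hM e he
    exact Finset.card_pair (hne i)
  have hmem : ∀ e ∈ M, ∀ x ∈ e, e = {x, σ x} := by
    intro e he x hx
    obtain ⟨i, rfl⟩ := hM e he
    simp only [Finset.mem_insert, Finset.mem_singleton] at hx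
    rcases hx with rfl | rfl
    · rfl
    · rw [(hσ i).1, Finset.pair_comm]
  have hdis : ∀ e ∈ M, ∀ f ∈ M, e ≠ f → Disjoint e f := by
    intro e he f hf hef
    rw [Finset.disjoint_left]
    intro x hx hx'
    exact hef ((hmem e he x hx).trans (hmem f hf x hx').symm)
  have hcov : ∀ i : Fin (2 * n), ∃ e ∈ M, i ∈ e := fun i =>
    ⟨{i, σ i}, Finset.mem_image_of_mem _ (Finset.mem_univ i), by simp⟩
  have hpair : ∀ e ∈ M, ∀ a b, e = {a, b} → b = σ a ∧ a = σ b := by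
    intro e he a b hab
    have h := hmem e he a (by simp [hab])
    have hc := h2 e he
    have hne' : a ≠ b := by
      rintro rfl
      simp [hab] at hc
    have hb : b ∈ ({a, σ a} : Finset _) := by rw [← h, hab]; simp
    simp only [Finset.mem_insert, Finset.mem_singleton] at hb
    have hb' : b = σ a := hb.resolve_left hne'.symm
    exact ⟨hb', by rw [hb', (hσ a).1]⟩
  refine ⟨M, ?_, h2, hdis, hcov, ?_, ?_⟩
  · have h := Finset.card_biUnion (s := M) (t := id) hdis
    have hu : M.biUnion id = Finset.univ := by
      ext i
      simpa using hcov i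
    rw [hu, Finset.sum_congr rfl (show ∀ e ∈ M, (id e).card = 2 from h2)] at h
    simp at h
    omega
  · intro e he a b hab _ h
    rw [(hpair e he a b hab).1] at h
    exact (hσ a).2 h.symm
  · intro e he f hf a b a' b' h h'
    obtain ⟨h1, h2⟩ := hpair e he a b h
    obtain ⟨h3, h4⟩ := hpair f hf a' b' h'
    have q : ∀ i j k l : Fin (2 * n), k = σ i → l = σ j →
        ¬ ((i : ℕ) < j ∧ (j : ℕ) < k ∧ (k : ℕ) < l) := by
      rintro i j k l rfl rfl ⟨h1, h2, h3⟩
      exact hcr i j ⟨h1, h2, h3⟩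
    have q1 := q a a' b b' h1 h3
    have q2 := q a b' b a' h1 h4
    have q3 := q b a' a b' h2 h3
    have q4 := q b b' a a' h2 h4
    have q5 := q a' a b' b h3 h1
    have q6 := q b' a a' b h4 h1
    have q7 := q a' b b' a h3 h2
    have q8 := q b' b a' a h4 h2
    clear q
    unfold Interleaves
    simp only
    omega
end

section
/- Let c be a balanced coloring of the 2n collinear points and let t be the smallest positive integer such that among the first t points the number of red points equals the number of blue points (such t exists since the full set is balanced). Then t is even, say t = 2m, and the first and the t-th point have different colors: c 0 ≠ c (2m−1). -/
/-- The prefix consisting of the first `t` points is color-balanced: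
the number of red points among them is exactly `t / 2`. -/
def PrefixBalanced {N : ℕ} (c : Fin N → Bool) (t : ℕ) : Prop :=
  2 * ((Finset.univ.filter (fun i : Fin N => (i : ℕ) < t ∧ c i = true)).card) = t

theorem prefix_count_succ {N : ℕ} (c : Fin N → Bool) (s : ℕ) (hs : s < N) :
    (Finset.univ.filter (fun i : Fin N => (i : ℕ) < s + 1 ∧ c i = true)).card =
      (Finset.univ.filter (fun i : Fin N => (i : ℕ) < s ∧ c i = true)).card +
        (if c ⟨s, hs⟩ = true then 1 else 0) := by
  split_ifs with h
  · have : Finset.univ.filter (fun i : Fin N => (i : ℕ) < s + 1 ∧ c i = true) =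
        insert ⟨s, hs⟩ (Finset.univ.filter (fun i : Fin N => (i : ℕ) < s ∧ c i = true)) := by
      ext i
      simp only [Finset.mem_filter, Finset.mem_univ, true_and, Finset.mem_insert, Fin.ext_iff]
      constructor
      · rintro ⟨h1, h2⟩
        by_cases h3 : (i : ℕ) = s
        · exact Or.inl h3
        · exact Or.inr ⟨by omega, h2⟩
      · rintro (h1 | ⟨h1, h2⟩)
        · have : i = ⟨s, hs⟩ := Fin.ext h1
          subst this
          exact ⟨by simp, h⟩
        · exact ⟨by omega, h2⟩
    rw [this, Finset.card_insert_of_notMem (by simp)]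
  · rw [add_zero]
    congr 1
    ext i
    simp only [Finset.mem_filter, Finset.mem_univ, true_and]
    constructor
    · rintro ⟨h1, h2⟩
      refine ⟨?_, h2⟩
      by_contra h3
      have : i = ⟨s, hs⟩ := Fin.ext (by simp; omega)
      subst this
      exact h h2
    · rintro ⟨h1, h2⟩
      exact ⟨by omega, h2⟩

/-- For a balanced coloring of `2n` collinear points, the shortest nonempty balanced
prefix has even length `2m`, and its first and last points have different colors. -/
theorem shortest_balanced_prefix_even_and_endpoints_differ
    (n : ℕ) (hn : 1 ≤ n) (c : Fin (2 * n) → Bool)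
    (hbal : (Finset.univ.filter (fun i => c i = true)).card = n)
    (t : ℕ) (htpos : 0 < t) (htle : t ≤ 2 * n)
    (htb : PrefixBalanced c t)
    (hmin : ∀ s : ℕ, 0 < s → s ≤ 2 * n → PrefixBalanced c s → t ≤ s) :
    ∃ m : ℕ, t = 2 * m ∧ c ⟨0, by omega⟩ ≠ c ⟨t - 1, by omega⟩ := by
  unfold PrefixBalanced at htb hmin
  have step := prefix_count_succ c
  have h0 : (Finset.univ.filter (fun i : Fin (2 * n) => (i : ℕ) < 0 ∧ c i = true)).card = 0 := by
    simp
  generalize hR : (fun s : ℕ =>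
    (Finset.univ.filter (fun i : Fin (2 * n) => (i : ℕ) < s ∧ c i = true)).card) = R at *
  have hR' : ∀ s, (Finset.univ.filter
      (fun i : Fin (2 * n) => (i : ℕ) < s ∧ c i = true)).card = R s := fun s => by rw [← hR]
  simp only [hR'] at htb hmin step h0
  refine ⟨R t, htb.symm, fun heq => ?_⟩
  have h1 := step 0 (by omega)
  obtain ⟨u, rfl⟩ : ∃ u, t = u + 1 := ⟨t - 1, by omega⟩
  have hlast := step u (by omega)
  simp only [Nat.add_sub_cancel] at heq
  rw [← heq] at hlast
  by_cases hc : c ⟨0, by omega⟩ = true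
  · have key : ∀ s, s + 1 ≤ u → s + 1 < 2 * R (s + 1) := by
      intro s
      induction s with
      | zero => intro _; simp only [hc, if_true] at h1; omega
      | succ k ih =>
        intro hk
        have a := ih (by omega)
        have b := step (k + 1) (by omega)
        have d := hmin (k + 1 + 1) (by omega) (by omega)
        split_ifs at b <;> omega
    have e := key (u - 1)
    simp only [hc, if_true] at hlast
    rcases Nat.eq_zero_or_pos u with h | h
    · omega
    · rw [Nat.sub_add_cancel h] at e; omega
  · have key : ∀ s, s + 1 ≤ u → 2 * R (s + 1) < s + 1 := by
      intro s
      induction s with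
      | zero => intro _; rw [if_neg hc] at h1; omega
      | succ k ih =>
        intro hk
        have a := ih (by omega)
        have b := step (k + 1) (by omega)
        have d := hmin (k + 1 + 1) (by omega) (by omega)
        split_ifs at b <;> omega
    have e := key (u - 1)
    rw [if_neg hc] at hlast
    rcases Nat.eq_zero_or_pos u with h | h
    · omega
    · rw [Nat.sub_add_cancel h] at e; omega
end

section
/- Let c be a balanced coloring of the 2n collinear points with strictly increasing positions x : Fin (2n) → ℝ, and let 2m be the length of the shortest nonempty balanced prefix. Then every minimum-weight non-crossing perfect bichromatic matching M (i.e., M is a non-crossing perfect bichromatic matching and no non-crossing perfect bichromatic matching has strictly smaller total weight) contains the pair {0, 2m−1} matching the first point with the last point of that prefix. -/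
/-- `M` is a non-crossing perfect bichromatic matching of the `N` collinear points:
its elements are pairs `(a, b)` with `a < b` of differently colored points, every
point belongs to exactly one pair, and no two pairs interleave. -/
def IsNCMatching {N : ℕ} (c : Fin N → Bool) (M : Finset (Fin N × Fin N)) : Prop :=
  (∀ p ∈ M, p.1 < p.2 ∧ c p.1 ≠ c p.2) ∧
  (∀ i : Fin N, ∃! p, p ∈ M ∧ (i = p.1 ∨ i = p.2)) ∧
  (∀ p ∈ M, ∀ q ∈ M, p ≠ q →
    ¬ Interleaves (((p.1 : ℕ)), ((p.2 : ℕ))) (((q.1 : ℕ)), ((q.2 : ℕ))))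

/-- The total weight of a matching: each pair weighs the distance between the
positions of its endpoints. -/
def matchingWeight {N : ℕ} (x : Fin N → ℝ) (M : Finset (Fin N × Fin N)) : ℝ :=
  ∑ p ∈ M, |x p.2 - x p.1|

lemma prefix_count {N : ℕ} (c : Fin N → Bool) (t : ℕ) (ht : t ≤ N) :
    (Finset.univ.filter (fun i : Fin N => (i : ℕ) < t ∧ c i = true)).card +
    (Finset.univ.filter (fun i : Fin N => (i : ℕ) < t ∧ c i = false)).card = t := by
  rw [← Finset.card_union_of_disjoint]
  · have : (Finset.univ.filter (fun i : Fin N => (i : ℕ) < t ∧ c i = true)) ∪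
      (Finset.univ.filter (fun i : Fin N => (i : ℕ) < t ∧ c i = false)) =
      Finset.univ.filter (fun i : Fin N => (i : ℕ) < t) := by
      ext i
      cases h : c i <;> simp [h]
    rw [this, Fin.card_filter_val_lt]
    omega
  · rw [Finset.disjoint_left]
    intro i hi hj
    simp at hi hj
    simp [hi.2] at hj

lemma prefixBalanced_iff {N : ℕ} (c : Fin N → Bool) (t : ℕ) (ht : t ≤ N) (k : Bool) :
    PrefixBalanced c t ↔
    (Finset.univ.filter (fun i : Fin N => (i : ℕ) < t ∧ c i = k)).card =
    (Finset.univ.filter (fun i : Fin N => (i : ℕ) < t ∧ c i = !k)).card := by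
  have := prefix_count c t ht
  unfold PrefixBalanced
  cases k <;> simp <;> omega

lemma nc_uniq {N : ℕ} {c : Fin N → Bool} {M : Finset (Fin N × Fin N)} (hM : IsNCMatching c M)
    {p q : Fin N × Fin N} (hp : p ∈ M) (hq : q ∈ M) (i : Fin N) (h1 : i = p.1 ∨ i = p.2)
    (h2 : i = q.1 ∨ i = q.2) : p = q :=
  (hM.2.1 i).unique ⟨hp, h1⟩ ⟨hq, h2⟩

/-- The partner function of a matching. -/
lemma nc_partner {N : ℕ} {c : Fin N → Bool} {M : Finset (Fin N × Fin N)}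
    (hM : IsNCMatching c M) :
    ∃ s : Fin N → Fin N, (∀ i, (i, s i) ∈ M ∨ (s i, i) ∈ M) ∧ (∀ i, s (s i) = i) ∧
      (∀ i, c (s i) = !(c i)) := by
  have h : ∀ i, ∃ j, (i, j) ∈ M ∨ (j, i) ∈ M := by
    intro i
    obtain ⟨⟨a, b⟩, ⟨hp, h⟩, -⟩ := hM.2.1 i
    rcases h with rfl | rfl
    · exact ⟨b, Or.inl hp⟩
    · exact ⟨a, Or.inr hp⟩
  choose s hs using h
  refine ⟨s, hs, ?_, ?_⟩
  · intro i
    rcases hs i with h1 | h1 <;> rcases hs (s i) with h2 | h2 <;>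
      have h3 := nc_uniq hM h1 h2 (s i) (by simp) (by simp) <;>
      simp only [Prod.mk.injEq] at h3
    · rw [← h3.2, ← h3.1]
    · exact h3.1.symm
    · exact h3.2.symm
    · rw [← h3.1, ← h3.2]
  · intro i
    rcases hs i with h1 | h1 <;> have h2 := (hM.1 _ h1).2 <;> simp only at h2 <;>
      cases h3 : c i <;> cases h4 : c (s i) <;> simp_all

/-- Exchange step: two consecutive nested edges with opposite colors can be improved. -/
lemma nc_exchange {N : ℕ} {c : Fin N → Bool} {M : Finset (Fin N × Fin N)}
    (hM : IsNCMatching c M) (x : Fin N → ℝ) (hx : StrictMono x) (T : ℕ)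
    (a b a' b' : Fin N) (he : (a, b) ∈ M) (he' : (a', b') ∈ M)
    (h1 : a < a') (h2 : (a' : ℕ) < T) (h3 : T ≤ (b' : ℕ)) (h4 : b' < b) (hc : c a ≠ c a')
    (hmid : ∀ p ∈ M, (p.1 : ℕ) < T → T ≤ (p.2 : ℕ) → p.1 ≤ a ∨ a' ≤ p.1) :
    ∃ M', IsNCMatching c M' ∧ matchingWeight x M' < matchingWeight x M := by
  have hcb := (hM.1 _ he).2
  have hcb' := (hM.1 _ he').2
  simp only at hcb hcb'
  have h23 : a' < b' := by rw [Fin.lt_def]; omega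
  have hne : (a', b') ≠ (a, b) := by
    intro h; simp only [Prod.mk.injEq] at h; exact h1.ne' h.1
  set R := (M.erase (a, b)).erase (a', b') with hR
  have hRM : ∀ p ∈ R, p ∈ M := fun p hp => Finset.mem_of_mem_erase (Finset.mem_of_mem_erase hp)
  have hRd : ∀ p ∈ R, ∀ i, (i = p.1 ∨ i = p.2) → i ≠ a ∧ i ≠ b ∧ i ≠ a' ∧ i ≠ b' := by
    intro p hp i hi
    have hpe : p ≠ (a, b) := Finset.ne_of_mem_erase (Finset.mem_of_mem_erase hp)
    have hpe' : p ≠ (a', b') := Finset.ne_of_mem_erase hp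
    refine ⟨?_, ?_, ?_, ?_⟩ <;> rintro rfl
    · exact hpe (nc_uniq hM (hRM p hp) he _ hi (by simp))
    · exact hpe (nc_uniq hM (hRM p hp) he _ hi (by simp))
    · exact hpe' (nc_uniq hM (hRM p hp) he' _ hi (by simp))
    · exact hpe' (nc_uniq hM (hRM p hp) he' _ hi (by simp))
  have hn2 : (b', b) ∉ R := fun h => (hRd _ h b' (by simp)).2.2.2 rfl
  have hn1 : (a, a') ∉ insert (b', b) R := by
    rw [Finset.mem_insert]
    rintro (h | h)
    · simp only [Prod.mk.injEq] at h
      exact (h1.trans h23).ne h.1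
    · exact (hRd _ h a (by simp)).1 rfl
  have hnew : ∀ p ∈ R, ¬ Interleaves ((p.1 : ℕ), (p.2 : ℕ)) ((a : ℕ), (a' : ℕ)) ∧
      ¬ Interleaves ((p.1 : ℕ), (p.2 : ℕ)) ((b' : ℕ), (b : ℕ)) := by
    intro p hp
    have q1 := hM.2.2 p (hRM p hp) _ he (Finset.ne_of_mem_erase (Finset.mem_of_mem_erase hp))
    have q2 := hM.2.2 p (hRM p hp) _ he' (Finset.ne_of_mem_erase hp)
    have q3 := hmid p (hRM p hp)
    have q4 := hRd p hp p.1 (by simp)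
    have q5 := hRd p hp p.2 (by simp)
    have q6 := (hM.1 p (hRM p hp)).1
    obtain ⟨u, v⟩ := p
    simp only [Interleaves, Fin.lt_def, Fin.le_def, ne_eq, Fin.ext_iff] at *
    constructor <;> omega
  have hsymm : ∀ p q : ℕ × ℕ, Interleaves p q → Interleaves q p := by
    intro p q h
    exact h.symm
  refine ⟨insert (a, a') (insert (b', b) R), ⟨?_, ?_, ?_⟩, ?_⟩
  · intro p hp
    simp only [Finset.mem_insert] at hp
    rcases hp with rfl | rfl | hp
    · exact ⟨h1, hc⟩
    · refine ⟨h4, ?_⟩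
      simp only
      intro h
      cases g1 : c a <;> cases g2 : c a' <;> cases g3 : c b <;> cases g4 : c b' <;> simp_all
    · exact hM.1 p (hRM p hp)
  · intro i
    have key : ∀ p ∈ R, (i = p.1 ∨ i = p.2) → i ≠ a ∧ i ≠ b ∧ i ≠ a' ∧ i ≠ b' :=
      fun p hp h => hRd p hp i h
    have d1 : a ≠ b' := (h1.trans h23).ne
    have d2 : a ≠ b := ((h1.trans h23).trans h4).ne
    have d3 : a' ≠ b := (h23.trans h4).ne
    by_cases hi1 : i = a ∨ i = a'
    · refine ⟨(a, a'), ⟨by simp, hi1⟩, ?_⟩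
      rintro p ⟨hp, hpi⟩
      simp only [Finset.mem_insert] at hp
      rcases hp with rfl | rfl | hp
      · rfl
      · exfalso
        simp only at hpi
        rcases hi1 with rfl | rfl <;> rcases hpi with h | h <;> first | exact d1 h | exact d2 h | exact d3 h | exact h23.ne h
      · have := key p hp hpi
        tauto
    by_cases hi2 : i = b' ∨ i = b
    · refine ⟨(b', b), ⟨by simp, hi2⟩, ?_⟩
      rintro p ⟨hp, hpi⟩
      simp only [Finset.mem_insert] at hp
      rcases hp with rfl | rfl | hp
      · exact absurd hpi hi1
      · rfl
      · have := key p hp hpi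
        tauto
    obtain ⟨p, ⟨hp, hpi⟩, hu⟩ := hM.2.1 i
    have hpR : p ∈ R := by
      rw [hR, Finset.mem_erase, Finset.mem_erase]
      refine ⟨?_, ?_, hp⟩ <;> rintro rfl <;> simp only at hpi <;> tauto
    refine ⟨p, ⟨by simp [hpR], hpi⟩, ?_⟩
    rintro q ⟨hq, hqi⟩
    simp only [Finset.mem_insert] at hq
    rcases hq with rfl | rfl | hq
    · exact absurd hqi hi1
    · exact absurd hqi hi2
    · exact hu q ⟨hRM q hq, hqi⟩
  · have hself : ¬ Interleaves ((a : ℕ), (a' : ℕ)) ((b' : ℕ), (b : ℕ)) := by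
      simp only [Interleaves, Fin.lt_def] at *
      omega
    intro p hp q hq hpq
    simp only [Finset.mem_insert] at hp hq
    rcases hp with rfl | rfl | hp <;> rcases hq with rfl | rfl | hq
    · exact absurd rfl hpq
    · exact hself
    · exact fun h => (hnew q hq).1 (hsymm _ _ h)
    · exact fun h => hself (hsymm _ _ h)
    · exact absurd rfl hpq
    · exact fun h => (hnew q hq).2 (hsymm _ _ h)
    · exact (hnew p hp).1
    · exact (hnew p hp).2
    · exact hM.2.2 p (hRM p hp) q (hRM q hq) hpq
  · unfold matchingWeight
    rw [Finset.sum_insert hn1, Finset.sum_insert hn2,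
      ← Finset.add_sum_erase M _ he,
      ← Finset.add_sum_erase (M.erase (a, b)) _ (Finset.mem_erase.2 ⟨hne, he'⟩), ← hR]
    have x1 := hx h1
    have x2 := hx h23
    have x3 := hx h4
    simp only
    rw [abs_of_pos (by linarith), abs_of_pos (by linarith), abs_of_pos (by linarith),
      abs_of_pos (by linarith)]
    linarith

/-- If `2m` is the length of the shortest nonempty balanced prefix, then every
minimum-weight non-crossing perfect bichromatic matching contains the pair
matching the first point with the `2m`-th point. -/
theorem min_noncrossing_matching_contains_first_balanced_prefix_edge
    (n : ℕ) (hn : 1 ≤ n) (c : Fin (2 * n) → Bool)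
    (hbal : (Finset.univ.filter (fun i => c i = true)).card = n)
    (x : Fin (2 * n) → ℝ) (hx : StrictMono x)
    (m : ℕ) (hmpos : 0 < m) (hmle : 2 * m ≤ 2 * n)
    (hmb : PrefixBalanced c (2 * m))
    (hmin : ∀ s : ℕ, 0 < s → s ≤ 2 * n → PrefixBalanced c s → 2 * m ≤ s)
    (M : Finset (Fin (2 * n) × Fin (2 * n)))
    (hM : IsNCMatching c M)
    (hopt : ∀ M' : Finset (Fin (2 * n) × Fin (2 * n)),
      IsNCMatching c M' → matchingWeight x M ≤ matchingWeight x M') :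
    (⟨0, by omega⟩, (⟨2 * m - 1, by omega⟩ : Fin (2 * n))) ∈ M := by
  obtain ⟨s, hs, hss, hsc⟩ := nc_partner hM
  set z : Fin (2 * n) := ⟨0, by omega⟩ with hz
  have hzj : (z, s z) ∈ M := by
    rcases hs z with h | h
    · exact h
    · have := (hM.1 _ h).1
      simp [hz, Fin.lt_def] at this
  have hzlt : z < s z := (hM.1 _ hzj).1
  -- the prefix ending at the partner of the first point is balanced
  have hge : 2 * m ≤ (s z : ℕ) + 1 := by
    apply hmin _ (by omega) (by omega)
    have hclosed : ∀ i : Fin (2 * n), (i : ℕ) < (s z : ℕ) + 1 → (s i : ℕ) < (s z : ℕ) + 1 := by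
      intro i hi
      by_contra hcon
      have hiz : i ≠ z := by rintro rfl; omega
      have hisz : i ≠ s z := by
        rintro rfl
        rw [hss] at hcon
        rw [Fin.lt_def] at hzlt
        omega
      have hmem : (i, s i) ∈ M := by
        rcases hs i with h | h
        · exact h
        · have := (hM.1 _ h).1
          simp only [Fin.lt_def] at this
          omega
      have := hM.2.2 _ hzj _ hmem (by simp [Ne.symm hiz])
      have hz0 : (z : ℕ) = 0 := rfl
      simp only [Interleaves, Fin.lt_def, ne_eq, Fin.ext_iff] at *
      omega
    rw [prefixBalanced_iff c _ (by omega) true]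
    apply Finset.card_bij' (fun i _ => s i) (fun i _ => s i)
    · intro i hi
      simp only [Finset.mem_filter, Finset.mem_univ, true_and] at hi ⊢
      exact ⟨hclosed i hi.1, by rw [hsc, hi.2]⟩
    · intro i hi
      simp only [Finset.mem_filter, Finset.mem_univ, true_and] at hi ⊢
      exact ⟨hclosed i hi.1, by rw [hsc, hi.2]; rfl⟩
    · intro i _; exact hss i
    · intro i _; exact hss i
  by_cases hlt : (s z : ℕ) < 2 * m
  · have : s z = ⟨2 * m - 1, by omega⟩ := by
      apply Fin.ext
      simp only
      omega
    rw [← this]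
    exact hzj
  exfalso
  push Not at hlt
  -- an edge over the gap with opposite orientation
  have hopp : ∃ i : Fin (2 * n), (i : ℕ) < 2 * m ∧ 2 * m ≤ (s i : ℕ) ∧ c i ≠ c z := by
    by_contra hno
    push Not at hno
    rw [prefixBalanced_iff c _ hmle (c z)] at hmb
    have hsub : (Finset.univ.filter (fun i : Fin (2 * n) => (i : ℕ) < 2 * m ∧ c i = !(c z))).card <
        (Finset.univ.filter (fun i : Fin (2 * n) => (i : ℕ) < 2 * m ∧ c i = c z)).card := by
      rw [← Finset.card_image_of_injective _ (Function.LeftInverse.injective hss)]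
      apply Finset.card_lt_card
      rw [Finset.ssubset_iff_of_subset]
      · refine ⟨z, ?_, ?_⟩
        · simp only [Finset.mem_filter, Finset.mem_univ, true_and, and_true]
          change 0 < 2 * m
          omega
        · rw [Finset.mem_image]
          rintro ⟨i, hi, hiz⟩
          simp only [Finset.mem_filter, Finset.mem_univ, true_and] at hi
          have : i = s z := by rw [← hiz, hss]
          rw [this] at hi
          omega
      · intro j hj
        rw [Finset.mem_image] at hj
        obtain ⟨i, hi, rfl⟩ := hj
        simp only [Finset.mem_filter, Finset.mem_univ, true_and] at hi ⊢
        refine ⟨?_, by rw [hsc, hi.2, Bool.not_not]⟩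
        by_contra hcon
        have := hno i hi.1 (by omega)
        rw [hi.2] at this
        simp at this
    omega
  have hS' : (M.filter (fun p => (p.1 : ℕ) < 2 * m ∧ 2 * m ≤ (p.2 : ℕ) ∧ c p.1 ≠ c z)).Nonempty := by
    obtain ⟨i, h1, h2, h3⟩ := hopp
    refine ⟨(i, s i), ?_⟩
    rw [Finset.mem_filter]
    refine ⟨?_, h1, h2, h3⟩
    rcases hs i with h | h
    · exact h
    · have := (hM.1 _ h).1
      simp only [Fin.lt_def] at this
      omega
  obtain ⟨⟨a', b'⟩, hmem', hmin'⟩ := Finset.exists_min_image _ (fun p => p.1) hS'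
  rw [Finset.mem_filter] at hmem'
  obtain ⟨he', ha', hb', hca'⟩ := hmem'
  simp only at ha' hb' hca' hmin'
  have hza' : z < a' := by
    have : z ≠ a' := by rintro h; rw [h] at hca'; exact hca' rfl
    have hz0 : (z : ℕ) = 0 := rfl
    rw [Fin.lt_def]
    rw [ne_eq, Fin.ext_iff] at this
    omega
  have hS : (M.filter (fun p => p.1 < a' ∧ 2 * m ≤ (p.2 : ℕ))).Nonempty :=
    ⟨(z, s z), by rw [Finset.mem_filter]; exact ⟨hzj, hza', hlt⟩⟩
  obtain ⟨⟨a, b⟩, hmem, hmax⟩ := Finset.exists_max_image _ (fun p => p.1) hS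
  rw [Finset.mem_filter] at hmem
  obtain ⟨he, ha, hb⟩ := hmem
  simp only at ha hb hmax
  have hca : c a = c z := by
    by_contra hcon
    have := hmin' (a, b) (by
      rw [Finset.mem_filter]
      refine ⟨he, ?_, hb, hcon⟩
      simp only [Fin.lt_def] at *
      omega)
    exact absurd ha (not_lt.2 this)
  have hbb : b' < b := by
    have h1 : (a, b) ≠ (a', b') := by
      intro h; simp only [Prod.mk.injEq] at h; exact ha.ne h.1
    have h2 : b ≠ b' := by
      rintro rfl
      exact h1 (nc_uniq hM he he' b (by simp) (by simp))
    have h3 := hM.2.2 _ he _ he' h1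
    simp only [Interleaves, Fin.lt_def, ne_eq, Fin.ext_iff] at *
    omega
  obtain ⟨M', hM', hw⟩ := nc_exchange hM x hx (2 * m) a b a' b' he he' ha ha' hb' hbb
    (by rw [hca]; exact hca'.symm) (by
      intro p hp _ hp2
      by_contra hcon
      push Not at hcon
      exact absurd hcon.1 (not_lt.2 (hmax p (by rw [Finset.mem_filter]; exact ⟨hp, hcon.2, hp2⟩))))
  exact absurd (hopt M' hM') (not_le.2 hw)
end

section
/- Let c be a balanced coloring of the 2n collinear points with strictly increasing positions x : Fin (2n) → ℝ. Then there exists exactly one minimum-weight non-crossing perfect bichromatic matching, i.e., there is a unique non-crossing perfect bichromatic matching M such that every non-crossing perfect bichromatic matching M' ≠ M has strictly larger total weight. -/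
open Finset in
lemma ncm_sum {N : ℕ} {R : Type*} [AddCommMonoid R] {M : Finset (Fin N × Fin N)}
    (h1 : ∀ p ∈ M, p.1 < p.2)
    (h2 : ∀ i : Fin N, ∃! p, p ∈ M ∧ (i = p.1 ∨ i = p.2)) (f : Fin N → R) :
    ∑ i, f i = ∑ p ∈ M, (f p.1 + f p.2) := by
  have e1 : ∀ p ∈ M, f p.1 + f p.2 = ∑ i, if (i = p.1 ∨ i = p.2) then f i else 0 := by
    intro p hp
    have hne := (h1 p hp).ne
    rw [← Finset.sum_filter]
    have : (Finset.univ.filter (fun i => i = p.1 ∨ i = p.2)) = {p.1, p.2} := by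
      ext i; simp
    rw [this, Finset.sum_pair hne]
  rw [Finset.sum_congr rfl e1, Finset.sum_comm]
  refine Finset.sum_congr rfl fun i _ => ?_
  obtain ⟨p, ⟨hp, hpi⟩, hu⟩ := h2 i
  rw [Finset.sum_eq_single_of_mem p hp]
  · rw [if_pos hpi]
  · intro q hq hqp
    rw [if_neg]
    intro hqi
    exact hqp (hu q ⟨hq, hqi⟩)

/-- number of edges covering the gap before `k` -/
def ncCover {N : ℕ} (M : Finset (Fin N × Fin N)) (k : ℕ) : ℤ :=
  ∑ p ∈ M, if (p.1 : ℕ) < k ∧ k ≤ (p.2 : ℕ) then 1 else 0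

lemma ncm_prefix {N : ℕ} {M : Finset (Fin N × Fin N)}
    (h1 : ∀ p ∈ M, p.1 < p.2)
    (h2 : ∀ i : Fin N, ∃! p, p ∈ M ∧ (i = p.1 ∨ i = p.2)) (t : Fin N → ℤ)
    (ht : ∀ p ∈ M, t p.2 = - t p.1) (k : ℕ) :
    (∑ i : Fin N, if (i : ℕ) < k then t i else 0) =
      ∑ p ∈ M, if (p.1 : ℕ) < k ∧ k ≤ (p.2 : ℕ) then t p.1 else 0 := by
  rw [ncm_sum h1 h2]
  refine Finset.sum_congr rfl fun p hp => ?_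
  have a := h1 p hp
  have b := ht p hp
  have a' : (p.1 : ℕ) < p.2 := a
  split_ifs <;> omega

lemma ncm_cover_ge {N : ℕ} {M : Finset (Fin N × Fin N)}
    (h1 : ∀ p ∈ M, p.1 < p.2)
    (h2 : ∀ i : Fin N, ∃! p, p ∈ M ∧ (i = p.1 ∨ i = p.2)) (t : Fin N → ℤ)
    (ht : ∀ p ∈ M, t p.2 = - t p.1) (htt : ∀ i, |t i| = 1) (k : ℕ) :
    |∑ i : Fin N, if (i : ℕ) < k then t i else 0| ≤ ncCover M k := by
  rw [ncm_prefix h1 h2 t ht]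
  refine (Finset.abs_sum_le_sum_abs _ _).trans (Finset.sum_le_sum fun p _ => ?_)
  split_ifs
  · exact (htt _).le
  · simp

lemma ncm_weight {N : ℕ} {M : Finset (Fin N × Fin N)}
    (h1 : ∀ p ∈ M, p.1 < p.2) (x : Fin N → ℝ) (hx : StrictMono x) (X : ℕ → ℝ)
    (hX : ∀ i : Fin N, X i = x i) :
    matchingWeight x M = ∑ k ∈ Finset.range N, (X k - X (k-1)) * (ncCover M k : ℝ) := by
  unfold matchingWeight ncCover
  have e1 : ∀ p ∈ M, |x p.2 - x p.1| = ∑ k ∈ Finset.range N,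
      (X k - X (k-1)) * (if (p.1 : ℕ) < k ∧ k ≤ (p.2 : ℕ) then 1 else 0 : ℝ) := by
    intro p hp
    have a := h1 p hp
    have a' : (p.1 : ℕ) < p.2 := a
    rw [abs_of_pos (sub_pos.2 (hx a))]
    simp only [mul_ite, mul_one, mul_zero]
    rw [← Finset.sum_filter]
    have e2 : (Finset.range N).filter (fun k => (p.1 : ℕ) < k ∧ k ≤ (p.2 : ℕ))
        = Finset.Ico ((p.1 : ℕ) + 1) ((p.2 : ℕ) + 1) := by
      ext k
      have := p.2.isLt
      simp only [Finset.mem_filter, Finset.mem_range, Finset.mem_Ico]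
      omega
    rw [e2, ← Finset.sum_Ico_add' (fun k => X k - X (k-1)) p.1 p.2 1]
    simp only [Nat.add_sub_cancel]
    rw [Finset.sum_Ico_sub X a'.le, hX, hX]
  rw [Finset.sum_congr rfl e1, Finset.sum_comm]
  refine Finset.sum_congr rfl fun k _ => ?_
  push_cast
  rw [Finset.mul_sum]

/-- matching parentheses with respect to the height function `g` -/
def ncP (g : ℕ → ℤ) (i j : ℕ) : Prop :=
  i < j ∧ g i = g (j+1) ∧ ∀ k, i < k → k ≤ j → g i < g k

lemma ncP_right {g : ℕ → ℤ} {i j j' : ℕ} (h : ncP g i j) (h' : ncP g i j') : j = j' := by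
  obtain ⟨a, b, c⟩ := h
  obtain ⟨a', b', c'⟩ := h'
  rcases lt_trichotomy j j' with q | q | q
  · have := c' (j+1) (by omega) (by omega); omega
  · exact q
  · have := c (j'+1) (by omega) (by omega); omega

lemma ncP_left {g : ℕ → ℤ} {i i' j : ℕ} (h : ncP g i j) (h' : ncP g i' j) : i = i' := by
  obtain ⟨a, b, c⟩ := h
  obtain ⟨a', b', c'⟩ := h'
  rcases lt_trichotomy i i' with q | q | q
  · have := c i' (by omega) (by omega); omega
  · exact q
  · have := c' i (by omega) (by omega); omega

lemma ncP_mid {g : ℕ → ℤ} {i j l : ℕ} (h : ncP g i j) (h' : ncP g j l) : False := by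
  obtain ⟨a, b, c⟩ := h
  obtain ⟨a', b', c'⟩ := h'
  have := c j (by omega) (by omega)
  have := c' (j+1) (by omega) (by omega)
  omega

lemma ncP_cross {g : ℕ → ℤ} {i j k l : ℕ} (h : ncP g i j) (h' : ncP g k l)
    (h1 : i < k) (h2 : k < j) (h3 : j < l) : False := by
  obtain ⟨a, b, c⟩ := h
  obtain ⟨a', b', c'⟩ := h'
  have := c k (by omega) (by omega)
  have := c' (j+1) (by omega) (by omega)
  omega

lemma ncP_up {g : ℕ → ℤ} {N i : ℕ} (hi : i < N)
    (hs : ∀ k, k < N → g (k+1) = g k + 1 ∨ g (k+1) = g k - 1)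
    (hpos : ∀ k, 0 ≤ g k) (hN : g N = 0) (hu : g (i+1) = g i + 1) :
    ∃ j, j < N ∧ ncP g i j := by
  classical
  have hex : ∃ j, i < j ∧ j < N ∧ g (j+1) ≤ g i := by
    have h0 := hpos i
    have : i + 1 ≠ N := by rintro rfl; omega
    exact ⟨N - 1, by omega, by omega, by rw [Nat.sub_add_cancel (by omega)]; omega⟩
  obtain ⟨a, b, c⟩ := Nat.find_spec hex
  have hmin := fun m => @Nat.find_min _ _ hex m
  generalize Nat.find hex = j at *
  have key : ∀ k, i < k → k ≤ j → g i < g k := by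
    intro k hk hkj
    by_contra hc
    rcases Nat.lt_or_ge (i+1) k with q | q
    · refine hmin (k-1) (by omega) ⟨by omega, by omega, ?_⟩
      rw [Nat.sub_add_cancel (by omega)]; omega
    · have : k = i + 1 := by omega
      subst this; omega
  refine ⟨j, b, a, ?_, key⟩
  have := key j a le_rfl
  have := hs j b
  omega

lemma ncP_down {g : ℕ → ℤ} {N j : ℕ} (hj : j < N)
    (hs : ∀ k, k < N → g (k+1) = g k + 1 ∨ g (k+1) = g k - 1)
    (hpos : ∀ k, 0 ≤ g k) (h0 : g 0 = 0) (hu : g (j+1) = g j - 1) :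
    ∃ i, ncP g i j := by
  classical
  have hj0 : 0 < j := by
    rcases Nat.eq_zero_or_pos j with q | q
    · subst q; have := hpos (0+1); omega
    · exact q
  have hex : ∃ m, m < j ∧ g (j - 1 - m) ≤ g (j+1) := by
    refine ⟨j - 1, by omega, ?_⟩
    rw [Nat.sub_self, h0]; exact hpos _
  obtain ⟨a, b⟩ := Nat.find_spec hex
  have hmin := fun m => @Nat.find_min _ _ hex m
  generalize Nat.find hex = m at *
  have key : ∀ k, j - 1 - m < k → k ≤ j → g (j+1) < g k := by
    intro k hk hkj
    by_contra hc
    rcases Nat.lt_or_ge k j with q | q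
    · refine hmin (j - 1 - k) (by omega) ⟨by omega, ?_⟩
      have : j - 1 - (j - 1 - k) = k := by omega
      rw [this]; omega
    · have : k = j := by omega
      subst this; omega
  have e : g (j - 1 - m) = g (j+1) := by
    have := key (j - 1 - m + 1) (by omega) (by omega)
    have := hs (j - 1 - m) (by omega)
    omega
  refine ⟨j - 1 - m, by omega, e, ?_⟩
  intro k hk hkj
  rw [e]; exact key k hk hkj

lemma ncP_step {g : ℕ → ℤ} {N i j : ℕ} (hj : j < N) (h : ncP g i j)
    (hs : ∀ k, k < N → g (k+1) = g k + 1 ∨ g (k+1) = g k - 1) :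
    g (i+1) = g i + 1 ∧ g (j+1) = g j - 1 := by
  obtain ⟨a, b, c⟩ := h
  have := c (i+1) (by omega) (by omega)
  have := c j (by omega) (by omega)
  have := hs i (by omega)
  have := hs j (by omega)
  omega

lemma ncP_sign {h : ℕ → ℤ} {N i j : ℕ} (hj : j < N) (hp : ncP (fun k => |h k|) i j)
    (hs : ∀ k, k < N → h (k+1) = h k + 1 ∨ h (k+1) = h k - 1) :
    h (i+1) - h i = - (h (j+1) - h j) := by
  obtain ⟨a, b, c⟩ := hp
  simp only at b c
  have hsgn : ∀ d, i + 1 + d ≤ j → (0 < h (i+1) ↔ 0 < h (i+1+d)) := by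
    intro d
    induction d with
    | zero => intro; rfl
    | succ d ih =>
      intro hd
      rw [ih (by omega)]
      have := c (i+1+d) (by omega) (by omega)
      have := c (i+1+(d+1)) (by omega) (by omega)
      have := hs (i+1+d) (by omega)
      have : i + 1 + (d+1) = i+1+d+1 := by omega
      rw [this] at *
      have := abs_nonneg (h i)
      have := abs_pos.1 (lt_of_le_of_lt this (c (i+1+d) (by omega) (by omega)))
      have := abs_pos.1 (lt_of_le_of_lt (abs_nonneg (h i)) (c (i+1+d+1) (by omega) (by omega)))
      omega
  have q := hsgn (j - (i+1)) (by omega)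
  rw [Nat.add_sub_cancel' (by omega)] at q
  have c1 := c (i+1) (by omega) (by omega)
  have c2 := c j (by omega) (by omega)
  have := hs i (by omega)
  have := hs j (by omega)
  rw [b] at c2
  simp only [abs_eq_max_neg] at *
  omega

/-- A noncrossing matching with cover `g` has only `ncP g` edges. -/
lemma ncm_edge {N : ℕ} {c : Fin N → Bool} {M : Finset (Fin N × Fin N)}
    (hM : IsNCMatching c M) {p : Fin N × Fin N} (hp : p ∈ M) :
    ncP (ncCover M) p.1 p.2 := by
  obtain ⟨h1, h2, h3⟩ := hM
  have hlt : (p.1 : ℕ) < p.2 := (h1 p hp).1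
  have key : ∀ q ∈ M, q ≠ p → (q.1 : ℕ) ≠ p.1 ∧ (q.1 : ℕ) ≠ p.2 ∧ (q.2 : ℕ) ≠ p.1 ∧
      (q.2 : ℕ) ≠ p.2 ∧ (q.1 : ℕ) < q.2 ∧
      ¬ ((q.1 : ℕ) < p.1 ∧ (p.1 : ℕ) < q.2 ∧ (q.2 : ℕ) < p.2) ∧
      ¬ ((p.1 : ℕ) < q.1 ∧ (q.1 : ℕ) < p.2 ∧ (p.2 : ℕ) < q.2) := by
    intro q hq hqp
    have hq1 : (q.1 : ℕ) < q.2 := (h1 q hq).1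
    have hi := h3 q hq p hp hqp
    have u1 := (h2 p.1).unique (y₁ := q) (y₂ := p)
    have u2 := (h2 p.2).unique (y₁ := q) (y₂ := p)
    unfold Interleaves at hi
    simp only at hi
    rw [min_eq_left hq1.le, min_eq_left hlt.le, max_eq_right hq1.le, max_eq_right hlt.le] at hi
    refine ⟨fun e => ?_, fun e => ?_, fun e => ?_, fun e => ?_, hq1, by tauto, by tauto⟩
    · exact hqp (u1 ⟨hq, Or.inl (Fin.ext e.symm)⟩ ⟨hp, Or.inl rfl⟩)
    · exact hqp (u2 ⟨hq, Or.inl (Fin.ext e.symm)⟩ ⟨hp, Or.inr rfl⟩)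
    · exact hqp (u1 ⟨hq, Or.inr (Fin.ext e.symm)⟩ ⟨hp, Or.inl rfl⟩)
    · exact hqp (u2 ⟨hq, Or.inr (Fin.ext e.symm)⟩ ⟨hp, Or.inr rfl⟩)
  refine ⟨hlt, ?_, ?_⟩
  · unfold ncCover
    refine Finset.sum_congr rfl fun q hq => ?_
    by_cases e : q = p
    · subst e; rw [if_neg (by omega), if_neg (by omega)]
    · have := key q hq e
      split_ifs <;> omega
  · intro k hk hk'
    unfold ncCover
    refine Finset.sum_lt_sum (fun q hq => ?_) ⟨p, hp, ?_⟩
    · by_cases e : q = p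
      · subst e; split_ifs <;> omega
      · have := key q hq e
        split_ifs <;> omega
    · rw [if_neg (by omega), if_pos (by omega)]; norm_num

/-- For a balanced coloring of `2n` collinear points with strictly increasing
positions, there is a unique minimum-weight non-crossing perfect bichromatic
matching: a unique non-crossing perfect bichromatic matching `M` such that every
other non-crossing perfect bichromatic matching has strictly larger weight. -/
theorem min_noncrossing_matching_unique
    (n : ℕ) (hn : 1 ≤ n) (c : Fin (2 * n) → Bool)
    (hbal : (Finset.univ.filter (fun i => c i = true)).card = n)
    (x : Fin (2 * n) → ℝ) (hx : StrictMono x) :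
    ∃! M : Finset (Fin (2 * n) × Fin (2 * n)),
      IsNCMatching c M ∧
      ∀ M' : Finset (Fin (2 * n) × Fin (2 * n)),
        IsNCMatching c M' → M' ≠ M → matchingWeight x M < matchingWeight x M' := by
  classical
  set s : Fin (2*n) → ℤ := fun i => if c i = true then 1 else -1 with hsdef
  set h : ℕ → ℤ := fun k => ∑ i : Fin (2*n), if (i : ℕ) < k then s i else 0 with hdef
  have hstep' : ∀ i : Fin (2*n), h (i+1) = h i + s i := by
    intro i
    have e : h (i+1) - h i = ∑ j : Fin (2*n), if j = i then s j else 0 := by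
      rw [hdef]; simp only
      rw [← Finset.sum_sub_distrib]
      refine Finset.sum_congr rfl fun j _ => ?_
      simp only [Fin.ext_iff]
      split_ifs <;> omega
    rw [Finset.sum_ite_eq' Finset.univ i s] at e
    simp at e
    omega
  have hs1 : ∀ i, s i = 1 ∨ s i = -1 := by
    intro i; simp only [hsdef]; split_ifs <;> simp
  have hstep : ∀ k, k < 2*n → h (k+1) = h k + 1 ∨ h (k+1) = h k - 1 := by
    intro k hk
    have a := hstep' ⟨k, hk⟩
    have b := hs1 ⟨k, hk⟩
    simp only at a
    omega
  have h0 : h 0 = 0 := by simp [hdef]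
  have hN : h (2*n) = 0 := by
    have e : h (2*n) = ∑ i : Fin (2*n), (2 * (if c i = true then 1 else 0) - 1 : ℤ) := by
      simp only [hdef, hsdef]
      refine Finset.sum_congr rfl fun i _ => ?_
      rw [if_pos i.isLt]
      split_ifs <;> rfl
    rw [e, Finset.sum_sub_distrib, ← Finset.mul_sum, Finset.sum_boole, hbal]
    simp
  set g : ℕ → ℤ := fun k => |h k| with hg
  have gstep : ∀ k, k < 2*n → g (k+1) = g k + 1 ∨ g (k+1) = g k - 1 := by
    intro k hk
    have := hstep k hk
    simp only [hg, abs_eq_max_neg]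
    omega
  have gpos : ∀ k, 0 ≤ g k := fun k => abs_nonneg _
  have g0 : g 0 = 0 := by simp only [hg, h0, abs_zero]
  have gN : g (2*n) = 0 := by simp only [hg, hN, abs_zero]
  set M0 : Finset (Fin (2*n) × Fin (2*n)) :=
    Finset.univ.filter (fun p => ncP g p.1 p.2) with hM0
  have mem0 : ∀ p, p ∈ M0 ↔ ncP g p.1 p.2 := by intro p; simp [hM0]
  have A1 : ∀ p ∈ M0, p.1 < p.2 := fun p hp => ((mem0 p).1 hp).1
  have A2 : ∀ i : Fin (2*n), ∃! p, p ∈ M0 ∧ (i = p.1 ∨ i = p.2) := by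
    intro i
    have uniq : ∀ p q : Fin (2*n) × Fin (2*n), p ∈ M0 → (i = p.1 ∨ i = p.2) →
        q ∈ M0 → (i = q.1 ∨ i = q.2) → p = q := by
      rintro ⟨a, b⟩ ⟨a', b'⟩ hp hpi hq hqi
      rw [mem0] at hp hq
      simp only at hp hq hpi hqi
      rcases hpi with rfl | rfl <;> rcases hqi with rfl | rfl
      · rw [Prod.mk.injEq]; exact ⟨rfl, Fin.ext (ncP_right hp hq)⟩
      · exact (ncP_mid hq hp).elim
      · exact (ncP_mid hp hq).elim
      · rw [Prod.mk.injEq]; exact ⟨Fin.ext (ncP_left hp hq), rfl⟩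
    rcases gstep i i.isLt with q | q
    · obtain ⟨j, hj, hP⟩ := ncP_up i.isLt gstep gpos gN q
      have hm : (i, (⟨j, hj⟩ : Fin (2*n))) ∈ M0 := (mem0 _).2 hP
      exact ⟨_, ⟨hm, Or.inl rfl⟩, fun p hp => uniq _ _ hp.1 hp.2 hm (Or.inl rfl)⟩
    · obtain ⟨j, hP⟩ := ncP_down i.isLt gstep gpos g0 q
      have hm : ((⟨j, hP.1.trans i.isLt⟩ : Fin (2*n)), i) ∈ M0 := (mem0 _).2 hP
      exact ⟨_, ⟨hm, Or.inr rfl⟩, fun p hp => uniq _ _ hp.1 hp.2 hm (Or.inr rfl)⟩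
  have NC0 : IsNCMatching c M0 := by
    refine ⟨fun p hp => ⟨A1 p hp, ?_⟩, A2, ?_⟩
    · intro hc
      have a := ncP_sign p.2.isLt ((mem0 p).1 hp) hstep
      have b1 := hstep' p.1
      have b2 := hstep' p.2
      have e : s p.1 = s p.2 := by simp only [hsdef, hc]
      have := hs1 p.1
      omega
    · intro p hp q hq _ hi
      have a1 : (p.1 : ℕ) < p.2 := A1 p hp
      have a2 : (q.1 : ℕ) < q.2 := A1 q hq
      unfold Interleaves at hi
      simp only at hi
      rw [min_eq_left a1.le, min_eq_left a2.le, max_eq_right a1.le, max_eq_right a2.le] at hi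
      rw [mem0] at hp hq
      rcases hi with ⟨u, v, w⟩ | ⟨u, v, w⟩
      · exact ncP_cross hp hq u v w
      · exact ncP_cross hq hp u v w
  have cov0 : ∀ k, k ≤ 2*n → ncCover M0 k = g k := by
    intro k hk
    have e := ncm_prefix A1 A2 (fun i => g (i+1) - g i) (fun p hp => by
      have := ncP_step p.2.isLt ((mem0 p).1 hp) gstep
      omega) k
    have e2 : ncCover M0 k = ∑ p ∈ M0, if (p.1 : ℕ) < k ∧ k ≤ (p.2 : ℕ)
        then (fun i : Fin (2*n) => g (i+1) - g i) p.1 else 0 := by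
      unfold ncCover
      refine Finset.sum_congr rfl fun p hp => ?_
      have := ncP_step p.2.isLt ((mem0 p).1 hp) gstep
      simp only
      split_ifs <;> omega
    rw [e2, ← e]
    rw [Fin.sum_univ_eq_sum_range (fun i => if i < k then g (i+1) - g i else 0) (2*n),
      ← Finset.sum_filter]
    have e3 : (Finset.range (2*n)).filter (fun i => i < k) = Finset.range k := by
      ext j; simp only [Finset.mem_filter, Finset.mem_range]; omega
    rw [e3, Finset.sum_range_sub, g0, sub_zero]
  have covge : ∀ M, IsNCMatching c M → ∀ k, g k ≤ ncCover M k := by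
    intro M hM k
    refine ncm_cover_ge (fun p hp => (hM.1 p hp).1) hM.2.1 s (fun p hp => ?_) (fun i => ?_) k
    · have := (hM.1 p hp).2
      simp only [hsdef]
      cases h1 : c p.1 <;> cases h2 : c p.2 <;> simp_all
    · rcases hs1 i with q | q <;> rw [q] <;> simp
  set X : ℕ → ℝ := fun k => if hk : k < 2*n then x ⟨k, hk⟩ else 0 with hXd
  have hX : ∀ i : Fin (2*n), X i = x i := by
    intro i; simp [hXd, i.isLt]
  have hXlt : ∀ k, 0 < k → k < 2*n → 0 < X k - X (k-1) := by
    intro k hk hk'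
    simp only [hXd]
    rw [dif_pos hk', dif_pos (by omega), sub_pos]
    apply hx
    rw [Fin.lt_def]; simp only; omega
  have main : ∀ M', IsNCMatching c M' → M' ≠ M0 → matchingWeight x M0 < matchingWeight x M' := by
    intro M' hM' hne
    rw [ncm_weight A1 x hx X hX, ncm_weight (fun p hp => (hM'.1 p hp).1) x hx X hX]
    have hex : ∃ k, 0 < k ∧ k < 2*n ∧ g k < ncCover M' k := by
      by_contra hcon
      push Not at hcon
      apply hne
      have hc0 : ncCover M' 0 = 0 := by
        unfold ncCover; exact Finset.sum_eq_zero fun p _ => by simp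
      have hcN : ncCover M' (2*n) = 0 := by
        unfold ncCover
        exact Finset.sum_eq_zero fun p _ => by
          have := p.2.isLt
          rw [if_neg]; omega
      have heq : ∀ k, k ≤ 2*n → ncCover M' k = g k := by
        intro k hk
        rcases Nat.eq_zero_or_pos k with rfl | q
        · rw [hc0, g0]
        · rcases hk.eq_or_lt with rfl | q'
          · rw [hcN, gN]
          · exact le_antisymm (hcon k q q') (covge M' hM' k)
      have hsub : ∀ p, p ∈ M' → p ∈ M0 := by
        intro p hp
        obtain ⟨a, b, d⟩ := ncm_edge hM' hp
        have l1 := p.1.isLt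
        have l2 := p.2.isLt
        rw [heq _ (by omega), heq _ (by omega)] at b
        refine (mem0 p).2 ⟨a, b, fun k hk hk' => ?_⟩
        have := d k hk hk'
        rwa [heq _ (by omega), heq _ (by omega)] at this
      refine Finset.Subset.antisymm hsub fun p hp => ?_
      obtain ⟨q, ⟨hq, hqi⟩, _⟩ := hM'.2.1 p.1
      have := (A2 p.1).unique ⟨hsub q hq, hqi⟩ ⟨hp, Or.inl rfl⟩
      rwa [← this]
    obtain ⟨k, hk0, hkN, hk⟩ := hex
    refine Finset.sum_lt_sum (fun j hj => ?_) ⟨k, Finset.mem_range.2 hkN, ?_⟩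
    · rw [Finset.mem_range] at hj
      rcases Nat.eq_zero_or_pos j with rfl | q
      · simp
      · refine mul_le_mul_of_nonneg_left ?_ (hXlt j q hj).le
        rw [cov0 j hj.le]
        exact_mod_cast covge M' hM' j
    · refine mul_lt_mul_of_pos_left ?_ (hXlt k hk0 hkN)
      rw [cov0 k hkN.le]
      exact_mod_cast hk
  refine ⟨M0, ⟨NC0, main⟩, ?_⟩
  rintro M ⟨hM, hMm⟩
  by_contra hne
  exact lt_asymm (main M hM hne) (hMm M0 NC0 (Ne.symm hne))
end

section
/- Let k be even with k ∣ n. Then there exists a bichromatic travelling salesman tour of the 2n chunked equidistant points on the circle whose total length is exactly n·k + 2n + 2n/k (that is, n(k + 2 + 2/k)). -/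
/-- The cyclic successor of an index. -/
def nextIdx {m : ℕ} (i : Fin m) : Fin m := ⟨(i.val + 1) % m, Nat.mod_lt _ i.pos⟩

/-- Point `i` of the chunked configuration is red iff `⌊i/k⌋` is even
(the points form alternately colored chunks of `k` consecutive points). -/
def redPt (k : ℕ) {m : ℕ} (i : Fin m) : Bool := decide ((i.val / k) % 2 = 0)

/-- The length of the edge between points `i` and `j` of the `2n` equidistant
points on the circle: one more than the hop distance along the circle. -/
def edgeLen (n : ℕ) (i j : Fin (2 * n)) : ℕ :=
  min (((j : ℕ) + 2 * n - (i : ℕ)) % (2 * n)) (((i : ℕ) + 2 * n - (j : ℕ)) % (2 * n)) + 1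

/-- `v` is a bichromatic travelling salesman tour: a cyclic enumeration of all
`2n` points in which cyclically consecutive points have different colors. -/
def IsBichromaticTour (n k : ℕ) (v : Fin (2 * n) → Fin (2 * n)) : Prop :=
  Function.Bijective v ∧ ∀ i : Fin (2 * n), redPt k (v i) ≠ redPt k (v (nextIdx i))

/-- The total length of a tour. -/
def tourLength (n : ℕ) (v : Fin (2 * n) → Fin (2 * n)) : ℕ :=
  ∑ i : Fin (2 * n), edgeLen n (v i) (v (nextIdx i))

namespace ChunkTour

/-- Position within a period of length `4h` (before the shift). -/
def pos (h r : ℕ) : ℕ :=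
  if r % 2 = 1 then 2 * h + r / 2 else if r < 2 * h then h + r / 2 else 3 * h + r / 2

/-- The lifted tour. -/
def lift (h i : ℕ) : ℕ := 4 * (h * (i / (4 * h))) + pos h (i % (4 * h))

/-- The edge lengths within a period. -/
def step (h r : ℕ) : ℕ :=
  if r % 2 = 0 then h + 1 else if r + 1 < 2 * h then h else h + 2

lemma lift_eq (h b r : ℕ) (hr : r < 4 * h) : lift h (4 * (h * b) + r) = 4 * (h * b) + pos h r := by
  have h0 : 0 < 4 * h := by omega
  have e : 4 * (h * b) + r = r + 4 * h * b := by ring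
  unfold lift
  rw [e, Nat.add_mul_div_left _ _ h0, Nat.add_mul_mod_self_left, Nat.mod_eq_of_lt hr,
    Nat.div_eq_of_lt hr, Nat.zero_add]

lemma decomp (h i : ℕ) (h0 : 0 < h) : ∃ b r, r < 4 * h ∧ i = 4 * (h * b) + r :=
  ⟨i / (4 * h), i % (4 * h), Nat.mod_lt _ (by omega), by
    have := Nat.div_add_mod i (4 * h)
    rw [mul_assoc] at this
    exact this.symm⟩

lemma lift_step (h i : ℕ) (h0 : 0 < h) :
    (lift h (i + 1) + 1 = lift h i + step h (i % (4 * h)) ∨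
      lift h i + 1 = lift h (i + 1) + step h (i % (4 * h))) := by
  obtain ⟨b, r, hr, rfl⟩ := decomp h i h0
  have e : (4 * (h * b) + r) % (4 * h) = r := by
    rw [show 4 * (h * b) + r = r + 4 * h * b by ring, Nat.add_mul_mod_self_left,
      Nat.mod_eq_of_lt hr]
  rw [e, lift_eq h b r hr]
  have hs : h * (b + 1) = h * b + h := by ring
  by_cases h1 : r + 1 < 4 * h
  · rw [add_assoc, lift_eq h b (r + 1) h1]
    unfold pos step
    split_ifs <;> omega
  · have e2 : 4 * (h * b) + r + 1 = 4 * (h * (b + 1)) + 0 := by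
      omega
    rw [e2, lift_eq h (b + 1) 0 (by omega), hs]
    unfold pos step
    split_ifs <;> first | contradiction | omega

lemma lift_color (h i : ℕ) (h0 : 0 < h) : lift h i % (4 * h) < 2 * h ↔ i % 2 = 0 := by
  obtain ⟨b, r, hr, rfl⟩ := decomp h i h0
  have e (s : ℕ) : (4 * (h * b) + s) % (4 * h) = s % (4 * h) := by
    rw [show 4 * (h * b) + s = s + 4 * h * b by ring, Nat.add_mul_mod_self_left]
  rw [lift_eq h b r hr, e]
  have e2 : (4 * (h * b) + r) % 2 = r % 2 := by omega
  rw [e2]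
  unfold pos
  split_ifs with h1 h2
  · rw [Nat.mod_eq_of_lt (by omega)]; omega
  · rw [Nat.mod_eq_of_lt (by omega)]; omega
  · rw [Nat.mod_eq_sub_mod (by omega), Nat.mod_eq_of_lt (by omega)]; omega

lemma color_iff (h x : ℕ) (h0 : 0 < h) : (x / (2 * h)) % 2 = 0 ↔ x % (4 * h) < 2 * h := by
  obtain ⟨b, r, hr, rfl⟩ := decomp h x h0
  have e : (4 * (h * b) + r) % (4 * h) = r := by
    rw [show 4 * (h * b) + r = r + 4 * h * b by ring, Nat.add_mul_mod_self_left,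
      Nat.mod_eq_of_lt hr]
  rw [e, show 4 * (h * b) + r = r + 2 * h * (2 * b) by ring, Nat.add_mul_div_left _ _ (by omega)]
  by_cases h1 : r < 2 * h
  · rw [Nat.div_eq_of_lt h1]; omega
  · have : r / (2 * h) = 1 := by
      rw [Nat.div_eq_iff (by omega)]; omega
    rw [this]; omega

lemma lift_inj (h i j : ℕ) (h0 : 0 < h) (hij : lift h i = lift h j) : i = j := by
  have ci := lift_color h i h0
  have cj := lift_color h j h0
  rw [hij, cj] at ci
  obtain ⟨b, r, hr, rfl⟩ := decomp h i h0
  obtain ⟨c, s, hs, rfl⟩ := decomp h j h0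
  rw [lift_eq h b r hr, lift_eq h c s hs] at hij
  have hb : b = c := by
    rcases lt_trichotomy b c with hl | hl | hl
    · have : h * (b + 1) ≤ h * c := Nat.mul_le_mul_left _ hl
      rw [mul_add] at this
      unfold pos at hij
      split_ifs at hij <;> omega
    · exact hl
    · have : h * (c + 1) ≤ h * b := Nat.mul_le_mul_left _ hl
      rw [mul_add] at this
      unfold pos at hij
      split_ifs at hij <;> omega
  subst hb
  unfold pos at hij
  split_ifs at hij <;> omega

lemma lift_bounds (h q i : ℕ) (h0 : 0 < h) (hi : i < 4 * (h * q)) :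
    h ≤ lift h i ∧ lift h i < 4 * (h * q) + h := by
  obtain ⟨b, r, hr, rfl⟩ := decomp h i h0
  rw [lift_eq h b r hr]
  have hb : b < q := by
    by_contra hc
    have : h * q ≤ h * b := Nat.mul_le_mul_left _ (not_lt.mp hc)
    omega
  have : h * (b + 1) ≤ h * q := Nat.mul_le_mul_left _ hb
  rw [mul_add] at this
  unfold pos
  split_ifs <;> omega

lemma mod_inj (N h x y : ℕ) (hx : h ≤ x) (hx2 : x < N + h) (hy : h ≤ y) (hy2 : y < N + h)
    (hxy : x % N = y % N) : x = y := by
  have hx3 := Nat.div_add_mod x N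
  have hy3 := Nat.div_add_mod y N
  rcases lt_trichotomy (x / N) (y / N) with hl | hl | hl
  · have : N * (x / N + 1) ≤ N * (y / N) := Nat.mul_le_mul_left _ hl
    rw [mul_add] at this
    omega
  · rw [hl] at hx3; omega
  · have : N * (y / N + 1) ≤ N * (x / N) := Nat.mul_le_mul_left _ hl
    rw [mul_add] at this
    omega

lemma lift_wrap (h q i : ℕ) (h0 : 0 < h) (hi : i < 4 * (h * q)) :
    lift h ((i + 1) % (4 * (h * q))) % (4 * (h * q)) = lift h (i + 1) % (4 * (h * q)) := by
  by_cases h1 : i + 1 < 4 * (h * q)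
  · rw [Nat.mod_eq_of_lt h1]
  · have : i + 1 = 4 * (h * q) := by omega
    rw [this, Nat.mod_self]
    have e1 := lift_eq h q 0 (by omega)
    have e2 := lift_eq h 0 0 (by omega)
    simp only [mul_zero, add_zero, zero_add] at e1 e2
    rw [e1, e2, Nat.add_mod_left]

lemma dist_aux (N x d : ℕ) (hd : 2 * d ≤ N) (hN : 0 < N) :
    ((x + d) % N + N - x % N) % N = d ∧ (x % N + N - (x + d) % N) % N = (N - d) % N := by
  have ha := Nat.mod_lt x hN
  rw [← Nat.mod_add_mod]
  generalize x % N = a at *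
  by_cases h1 : a + d < N
  · rw [Nat.mod_eq_of_lt h1]
    constructor
    · rw [show a + d + N - a = d + N by omega, Nat.add_mod_right, Nat.mod_eq_of_lt (by omega)]
    · congr 1; omega
  · rw [Nat.mod_eq_sub_mod (by omega : N ≤ a + d), Nat.mod_eq_of_lt (by omega : a + d - N < N)]
    constructor
    · rw [show a + d - N + N - a = d by omega, Nat.mod_eq_of_lt (by omega)]
    · rw [show a + N - (a + d - N) = (N - d) + N by omega, Nat.add_mod_right]

lemma min_aux (N d : ℕ) (hd : 2 * d ≤ N) (hN : 0 < N) : min d ((N - d) % N) = d := by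
  rcases Nat.eq_zero_or_pos d with rfl | h
  · simp
  · rw [Nat.mod_eq_of_lt (by omega)]; omega

lemma edge_eq (n x y s : ℕ) (hn : 0 < n) (i j : Fin (2 * n)) (hi : i.val = x % (2 * n))
    (hj : j.val = y % (2 * n)) (hs1 : 1 ≤ s) (hs : s ≤ n + 1)
    (h : y + 1 = x + s ∨ x + 1 = y + s) : edgeLen n i j = s := by
  obtain ⟨d, rfl⟩ : ∃ d, s = d + 1 := ⟨s - 1, by omega⟩
  unfold edgeLen
  rw [hi, hj]
  rcases h with h | h
  · obtain rfl : y = x + d := by omega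
    obtain ⟨h1, h2⟩ := dist_aux (2 * n) x d (by omega) (by omega)
    rw [h1, h2, min_aux _ _ (by omega) (by omega)]
  · obtain rfl : x = y + d := by omega
    obtain ⟨h1, h2⟩ := dist_aux (2 * n) y d (by omega) (by omega)
    rw [h1, h2, min_comm, min_aux _ _ (by omega) (by omega)]

lemma sum_first (h m : ℕ) (hm : m < h) :
    ∑ r ∈ Finset.range (2 * m), step h r = m * (2 * h + 1) := by
  induction m with
  | zero => simp
  | succ m ih =>
    rw [show 2 * (m + 1) = 2 * m + 1 + 1 by ring, Finset.sum_range_succ, Finset.sum_range_succ,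
      ih (by omega)]
    have e1 : step h (2 * m) = h + 1 := by unfold step; split_ifs <;> omega
    have e2 : step h (2 * m + 1) = h := by unfold step; split_ifs <;> omega
    rw [e1, e2]; ring

lemma sum_second (h m : ℕ) :
    ∑ r ∈ Finset.range (2 * m), step h (2 * (h - 1) + r) = m * (2 * h + 3) := by
  induction m with
  | zero => simp
  | succ m ih =>
    rw [show 2 * (m + 1) = 2 * m + 1 + 1 by ring, Finset.sum_range_succ, Finset.sum_range_succ, ih]
    have e1 : step h (2 * (h - 1) + 2 * m) = h + 1 := by unfold step; split_ifs <;> omega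
    have e2 : step h (2 * (h - 1) + (2 * m + 1)) = h + 2 := by unfold step; split_ifs <;> omega
    rw [e1, e2]; ring

lemma sum_period (h : ℕ) (h0 : 0 < h) :
    ∑ r ∈ Finset.range (4 * h), step h r = 4 * h * h + 4 * h + 2 := by
  rw [show 4 * h = 2 * (h - 1) + 2 * (h + 1) by omega, Finset.sum_range_add, sum_first h _ (by omega),
    sum_second]
  obtain ⟨t, rfl⟩ : ∃ t, h = t + 1 := ⟨h - 1, by omega⟩
  simp only [Nat.add_sub_cancel]
  ring

lemma sum_all (h q : ℕ) (h0 : 0 < h) :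
    ∑ i ∈ Finset.range (4 * (h * q)), step h (i % (4 * h)) = q * (4 * h * h + 4 * h + 2) := by
  induction q with
  | zero => simp
  | succ q ih =>
    rw [show 4 * (h * (q + 1)) = 4 * (h * q) + 4 * h by ring, Finset.sum_range_add, ih]
    have : ∑ x ∈ Finset.range (4 * h), step h ((4 * (h * q) + x) % (4 * h)) =
        ∑ r ∈ Finset.range (4 * h), step h r := by
      apply Finset.sum_congr rfl
      intro x hx
      rw [show 4 * (h * q) + x = x + 4 * h * q by ring, Nat.add_mul_mod_self_left,
        Nat.mod_eq_of_lt (Finset.mem_range.mp hx)]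
    rw [this, sum_period h h0]; ring

end ChunkTour

open ChunkTour in
/-- For even chunk size `k` dividing `n`, there is a bichromatic travelling
salesman tour of the `2n` chunked equidistant points on the circle of total
length exactly `n·k + 2n + 2n/k`. -/
theorem tsp_chunked_circle_even_upper
    (n k : ℕ) (hn : 1 ≤ n) (hk : 1 ≤ k) (hdvd : k ∣ n) (hke : Even k) :
    ∃ v : Fin (2 * n) → Fin (2 * n), IsBichromaticTour n k v ∧
      tourLength n v = n * k + 2 * n + 2 * n / k := by
  obtain ⟨h, rfl⟩ := hke
  obtain ⟨q, rfl⟩ := hdvd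
  have h0 : 0 < h := by omega
  have q0 : 0 < q := Nat.pos_of_ne_zero (by rintro rfl; simp at hn)
  have hN : 2 * ((h + h) * q) = 4 * (h * q) := by ring
  have hhq : h ≤ h * q := Nat.le_mul_of_pos_right _ q0
  have hnq : (h + h) * q = 2 * (h * q) := by ring
  let v : Fin (2 * ((h + h) * q)) → Fin (2 * ((h + h) * q)) :=
    fun i => ⟨lift h i.val % (2 * ((h + h) * q)), Nat.mod_lt _ i.pos⟩
  have hv : ∀ i, (v i).val = lift h i.val % (2 * ((h + h) * q)) := fun i => rfl
  have hvn : ∀ i, (v (nextIdx i)).val = lift h (i.val + 1) % (2 * ((h + h) * q)) := by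
    intro i
    rw [hv]
    simp only [nextIdx]
    have := lift_wrap h q i.val h0 (by rw [← hN]; exact i.isLt)
    rw [← hN] at this
    exact this
  have hcol : ∀ x : ℕ, (x % (2 * ((h + h) * q)) / (h + h)) % 2 = 0 ↔ x % (4 * h) < 2 * h := by
    intro x
    rw [← two_mul h, color_iff h _ h0, Nat.mod_mod_of_dvd]
    exact ⟨q, by ring⟩
  refine ⟨v, ⟨?_, ?_⟩, ?_⟩
  · apply Finite.injective_iff_bijective.mp
    intro i j hij
    have hij' : (v i).val = (v j).val := by rw [hij]
    rw [hv, hv] at hij'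
    have bi := lift_bounds h q i.val h0 (by rw [← hN]; exact i.isLt)
    have bj := lift_bounds h q j.val h0 (by rw [← hN]; exact j.isLt)
    rw [← hN] at bi bj
    exact Fin.ext (lift_inj h _ _ h0 (mod_inj _ h _ _ bi.1 bi.2 bj.1 bj.2 hij'))
  · intro i hc
    unfold redPt at hc
    rw [decide_eq_decide, hv, hvn, hcol, hcol, lift_color h _ h0, lift_color h _ h0] at hc
    omega
  · unfold tourLength
    have : ∀ i : Fin (2 * ((h + h) * q)),
        edgeLen ((h + h) * q) (v i) (v (nextIdx i)) = step h (i.val % (4 * h)) := by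
      intro i
      refine edge_eq _ _ _ _ hn _ _ (hv i) (hvn i) ?_ ?_ (lift_step h i.val h0)
      · unfold step; split_ifs <;> omega
      · unfold step; split_ifs <;> omega
    rw [Finset.sum_congr rfl (fun i _ => this i),
      Fin.sum_univ_eq_sum_range (fun i => step h (i % (4 * h))), hN, sum_all h q h0]
    have e : 4 * (h * q) / (h + h) = 2 * q := by
      rw [show 4 * (h * q) = (h + h) * (2 * q) by ring]
      exact Nat.mul_div_cancel_left _ (by omega)
    rw [e]; ring
end

section
/- Let k be even with k ∣ n. Then every bichromatic travelling salesman tour of the 2n chunked equidistant points on the circle has total length at least n·k + 2n + 2n/k (that is, n(k + 2 + 2/k)). -/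
/-- Whether the shortest arc between `x` and `y` covers the gap just before point `g`. -/
def covG (N x y g : ℕ) : ℕ :=
  if (2 * (max x y - min x y) ≤ N ↔ (min x y < g ∧ g ≤ max x y)) then 1 else 0

lemma covG_sum (N x y : ℕ) (hx : x < N) (hy : y < N) :
    ∑ g ∈ Finset.range N, covG N x y g ≤ min (max x y - min x y) (N - (max x y - min x y)) := by
  have hsub : Finset.Ioc (min x y) (max x y) ⊆ Finset.range N := by
    intro g hg
    simp only [Finset.mem_Ioc, Finset.mem_range] at *
    omega
  have hc := Finset.card_sdiff_add_card_eq_card hsub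
  rw [Finset.card_range, Nat.card_Ioc] at hc
  by_cases h : 2 * (max x y - min x y) ≤ N
  · have : ∑ g ∈ Finset.range N, covG N x y g = (Finset.Ioc (min x y) (max x y)).card := by
      rw [Finset.card_eq_sum_ones, ← Finset.sum_subset hsub (f := covG N x y)]
      · apply Finset.sum_congr rfl
        intro g hg
        rw [Finset.mem_Ioc] at hg
        simp only [covG, h, true_iff]
        rw [if_pos hg]
      · intro g _ hg
        rw [Finset.mem_Ioc] at hg
        simp only [covG, h, true_iff]
        rw [if_neg hg]
    rw [this, Nat.card_Ioc]
    omega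
  · have : ∑ g ∈ Finset.range N, covG N x y g
        = (Finset.range N \ Finset.Ioc (min x y) (max x y)).card := by
      rw [Finset.card_eq_sum_ones, ← Finset.sum_subset Finset.sdiff_subset (f := covG N x y)]
      · apply Finset.sum_congr rfl
        intro g hg
        rw [Finset.mem_sdiff, Finset.mem_Ioc] at hg
        simp only [covG, h, false_iff]
        rw [if_pos hg.2]
      · intro g hg hg2
        rw [Finset.mem_sdiff, Finset.mem_Ioc] at hg2
        simp only [covG, h, false_iff]
        rw [if_neg]
        tauto
    rw [this]
    omega

lemma edgeLen_ge (n : ℕ) (x y : Fin (2 * n)) :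
    ∑ g ∈ Finset.range (2 * n), covG (2 * n) x y g + 1 ≤ edgeLen n x y := by
  have h := covG_sum (2 * n) x y x.2 y.2
  have hx := x.2
  have hy := y.2
  unfold edgeLen
  apply Nat.succ_le_succ
  refine h.trans ?_
  rcases lt_trichotomy (x : ℕ) (y : ℕ) with hl | hl | hl
  · have e1 : ((y : ℕ) + 2 * n - x) % (2 * n) = y - x := by
      rw [show (y : ℕ) + 2 * n - x = (y - x) + 2 * n by omega, Nat.add_mod_right,
        Nat.mod_eq_of_lt (by omega)]
    have e2 : ((x : ℕ) + 2 * n - y) % (2 * n) = x + 2 * n - y := Nat.mod_eq_of_lt (by omega)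
    rw [e1, e2]; omega
  · rw [hl]; simp
  · have e1 : ((x : ℕ) + 2 * n - y) % (2 * n) = x - y := by
      rw [show (x : ℕ) + 2 * n - y = (x - y) + 2 * n by omega, Nat.add_mod_right,
        Nat.mod_eq_of_lt (by omega)]
    have e2 : ((y : ℕ) + 2 * n - x) % (2 * n) = y + 2 * n - x := Nat.mod_eq_of_lt (by omega)
    rw [e1, e2]; omega

lemma covG_wrap (N x y : ℕ) (hx : x < N) (hy : y < N) : covG N x y N = covG N x y 0 := by
  have h1 : ¬ (min x y < N ∧ N ≤ max x y) := by omega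
  have h2 : ¬ (min x y < 0 ∧ 0 ≤ max x y) := by omega
  unfold covG
  simp only [h1, h2]

/-- An edge with exactly one endpoint in `[a,b)` covers one of the two boundary gaps. -/
lemma covG_cut (N x y a b : ℕ) (h : ¬ ((a ≤ x ∧ x < b) ↔ (a ≤ y ∧ y < b))) :
    1 ≤ covG N x y a + covG N x y b := by
  have h3 : ¬ ((min x y < a ∧ a ≤ max x y) ↔ (min x y < b ∧ b ≤ max x y)) := by omega
  unfold covG
  by_cases h0 : 2 * (max x y - min x y) ≤ N <;>
  by_cases h1 : (min x y < a ∧ a ≤ max x y) <;>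
  by_cases h2 : (min x y < b ∧ b ≤ max x y) <;> simp only [h0, h1, h2] at h3 ⊢ <;> simp at h3 ⊢

lemma nextIdx_inj {m : ℕ} : Function.Injective (nextIdx : Fin m → Fin m) := by
  intro i j h
  have h' : (i.val + 1) % m = (j.val + 1) % m := congrArg Fin.val h
  have hi := i.2
  have hj := j.2
  have e : ∀ t, t < m → (t + 1) % m = if t + 1 = m then 0 else t + 1 := by
    intro t ht
    split_ifs with h
    · rw [h, Nat.mod_self]
    · exact Nat.mod_eq_of_lt (by omega)
  rw [e _ hi, e _ hj] at h'
  apply Fin.ext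
  split_ifs at h' <;> omega

lemma nextIdx_closed {m : ℕ} (P : Fin m → Prop) (hP : ∀ i, P i → P (nextIdx i))
    (i j : Fin m) (hi : P i) : P j := by
  have key : ∀ t : ℕ, P ⟨(i.val + t) % m, Nat.mod_lt _ i.pos⟩ := by
    intro t
    induction t with
    | zero =>
      have : (⟨(i.val + 0) % m, Nat.mod_lt _ i.pos⟩ : Fin m) = i :=
        Fin.ext (Nat.mod_eq_of_lt i.2)
      rw [this]; exact hi
    | succ t ih =>
      have := hP _ ih
      convert this using 1
      apply Fin.ext
      simp only [nextIdx]
      rw [Nat.mod_add_mod, add_assoc]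
  have := key (m - i.val + j.val)
  convert this using 1
  apply Fin.ext
  have hi := i.2
  simp only
  rw [show i.val + (m - i.val + j.val) = j.val + m by omega, Nat.add_mod_right,
    Nat.mod_eq_of_lt j.2]

/-- Number of tour edges covering gap `g`. -/
def tourCov (n : ℕ) (v : Fin (2 * n) → Fin (2 * n)) (g : ℕ) : ℕ :=
  ∑ i : Fin (2 * n), covG (2 * n) (v i) (v (nextIdx i)) g

lemma tourLength_ge (n : ℕ) (v : Fin (2 * n) → Fin (2 * n)) :
    ∑ g ∈ Finset.range (2 * n), tourCov n v g + 2 * n ≤ tourLength n v := by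
  unfold tourCov tourLength
  rw [Finset.sum_comm]
  calc _ = ∑ i : Fin (2 * n),
        (∑ g ∈ Finset.range (2 * n), covG (2 * n) (v i) (v (nextIdx i)) g + 1) := by
          rw [Finset.sum_add_distrib]; simp
    _ ≤ _ := Finset.sum_le_sum (fun i _ => edgeLen_ge n _ _)

lemma tourCov_pair (n : ℕ) (v : Fin (2 * n) → Fin (2 * n)) (hv : Function.Bijective v)
    (a b : ℕ) (ha : 1 ≤ a) (hab : a < b) (hb : b ≤ 2 * n) :
    2 ≤ tourCov n v a + tourCov n v b := by
  let Q : Fin (2 * n) → Prop := fun i => a ≤ (v i).val ∧ (v i).val < b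
  obtain ⟨i0, hi0⟩ := hv.2 ⟨a, by omega⟩
  obtain ⟨j0, hj0⟩ := hv.2 ⟨0, by omega⟩
  have hQi : Q i0 := by simp only [Q, hi0]; omega
  have hQj : ¬ Q j0 := by simp only [Q, hj0]; omega
  have h1 : ∃ i, Q i ∧ ¬ Q (nextIdx i) := by
    by_contra hc
    push Not at hc
    exact hQj (nextIdx_closed Q hc i0 j0 hQi)
  have h2 : ∃ i, ¬ Q i ∧ Q (nextIdx i) := by
    by_contra hc
    push Not at hc
    exact nextIdx_closed (fun i => ¬ Q i) hc j0 i0 hQj hQi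
  obtain ⟨p, hp1, hp2⟩ := h1
  obtain ⟨q, hq1, hq2⟩ := h2
  have hpq : p ≠ q := by rintro rfl; exact hq1 hp1
  unfold tourCov
  rw [← Finset.sum_add_distrib]
  calc 2 ≤ ∑ i ∈ ({p, q} : Finset (Fin (2 * n))),
        (covG (2 * n) (v i) (v (nextIdx i)) a + covG (2 * n) (v i) (v (nextIdx i)) b) := by
        rw [Finset.sum_pair hpq]
        have e1 := covG_cut (2 * n) (v p) (v (nextIdx p)) a b (fun h => hp2 (h.1 hp1))
        have e2 := covG_cut (2 * n) (v q) (v (nextIdx q)) a b (fun h => hq1 (h.2 hq2))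
        omega
    _ ≤ _ := Finset.sum_le_sum_of_subset (Finset.subset_univ _)

lemma sum_ind (n : ℕ) (a b : ℕ) (hb : b ≤ 2 * n) :
    ∑ p : Fin (2 * n), (if a ≤ p.val ∧ p.val < b then 1 else 0) = b - a := by
  rw [Fin.sum_univ_eq_sum_range (fun p => if a ≤ p ∧ p < b then 1 else 0), ← Finset.card_filter,
    ← Nat.card_Ico]
  congr 1
  ext p
  simp only [Finset.mem_filter, Finset.mem_range, Finset.mem_Ico]
  omega

lemma tourCov_chunk (n k : ℕ) (v : Fin (2 * n) → Fin (2 * n)) (hv : IsBichromaticTour n k v)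
    (c a b : ℕ) (ha : c * k ≤ a) (hbk : b ≤ c * k + k) (hb : b ≤ 2 * n) :
    2 * (b - a) ≤ tourCov n v a + tourCov n v b := by
  obtain ⟨hbij, hcol⟩ := hv
  have s1 : ∑ i : Fin (2 * n), (if a ≤ (v i).val ∧ (v i).val < b then 1 else 0) = b - a := by
    rw [← sum_ind n a b hb]
    exact hbij.sum_comp (fun p : Fin (2 * n) => if a ≤ p.val ∧ p.val < b then 1 else 0)
  have hnb : Function.Bijective (nextIdx : Fin (2 * n) → Fin (2 * n)) :=
    Finite.injective_iff_bijective.1 nextIdx_inj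
  have s2 : ∑ i : Fin (2 * n),
      (if a ≤ (v (nextIdx i)).val ∧ (v (nextIdx i)).val < b then 1 else 0) = b - a := by
    rw [← s1]
    exact hnb.sum_comp (fun i : Fin (2 * n) => if a ≤ (v i).val ∧ (v i).val < b then 1 else 0)
  have hdiv : ∀ p : ℕ, a ≤ p → p < b → p / k = c := by
    intro p h1 h2
    apply Nat.div_eq_of_lt_le
    · omega
    · rw [Nat.succ_mul]; omega
  unfold tourCov
  rw [two_mul]
  nth_rw 1 [← s1]
  rw [← s2, ← Finset.sum_add_distrib, ← Finset.sum_add_distrib]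
  apply Finset.sum_le_sum
  intro i _
  have hc := covG_cut (2 * n) (v i) (v (nextIdx i)) a b
  have hn := hcol i
  split_ifs with h1 h2 h2
  · exfalso
    apply hn
    unfold redPt
    rw [hdiv _ h1.1 h1.2, hdiv _ h2.1 h2.2]
  · exact hc (by tauto)
  · exact hc (by tauto)
  · simp

lemma sum_chunks (C : ℕ → ℕ) (M k : ℕ) :
    ∑ g ∈ Finset.range (M * k), C g =
      ∑ c ∈ Finset.range M, ∑ j ∈ Finset.range k, C (c * k + j) := by
  induction M with
  | zero => simp
  | succ M ih => rw [Finset.sum_range_succ, ← ih, Nat.succ_mul, Finset.sum_range_add]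

lemma sum_tri (h : ℕ) : ∑ j ∈ Finset.range (2 * h), ((h - j) + (j - h)) = h * h := by
  rw [two_mul, Finset.sum_range_add]
  have e1 : ∑ j ∈ Finset.range h, ((h - j) + (j - h)) = ∑ j ∈ Finset.range h, (j + 1) := by
    rw [← Finset.sum_range_reflect (fun j => j + 1)]
    apply Finset.sum_congr rfl
    intro j hj
    rw [Finset.mem_range] at hj
    omega
  have e2 : ∑ j ∈ Finset.range h, ((h - (h + j)) + (h + j - h)) = ∑ j ∈ Finset.range h, j := by
    apply Finset.sum_congr rfl
    intro j hj
    omega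
  rw [e1, e2]
  clear e1 e2
  induction h with
  | zero => simp
  | succ h ih =>
    rw [Finset.sum_range_succ, Finset.sum_range_succ]
    nlinarith

lemma chunk_bound (n h : ℕ) (hh : 1 ≤ h) (v : Fin (2 * n) → Fin (2 * n))
    (hv : IsBichromaticTour n (2 * h) v) (c : ℕ) (hc : c * (2 * h) + 2 * h ≤ 2 * n) :
    4 * (h * h) + 2 * tourCov n v (c * (2 * h) + h) ≤
      ∑ j ∈ Finset.range (2 * h), tourCov n v (c * (2 * h) + j) +
      ∑ j ∈ Finset.range (2 * h), tourCov n v (c * (2 * h) + j + 1) := by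
  rw [← Finset.sum_range_reflect (fun j => tourCov n v (c * (2 * h) + j + 1)),
    ← Finset.sum_add_distrib, ← sum_tri, Finset.mul_sum]
  have e : 2 * tourCov n v (c * (2 * h) + h) =
      ∑ j ∈ Finset.range (2 * h), if j = h then 2 * tourCov n v (c * (2 * h) + h) else 0 := by
    rw [Finset.sum_ite_eq', if_pos (Finset.mem_range.2 (by omega))]
  rw [e, ← Finset.sum_add_distrib]
  apply Finset.sum_le_sum
  intro j hj
  rw [Finset.mem_range] at hj
  rw [show c * (2 * h) + (2 * h - 1 - j) + 1 = c * (2 * h) + (2 * h - j) by omega]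
  rcases lt_trichotomy j h with hl | rfl | hl
  · have := tourCov_chunk n (2 * h) v hv c (c * (2 * h) + j) (c * (2 * h) + (2 * h - j))
      (by omega) (by omega) (by omega)
    rw [if_neg (by omega)]
    omega
  · rw [if_pos rfl, show 2 * j - j = j by omega]
    omega
  · have := tourCov_chunk n (2 * h) v hv c (c * (2 * h) + (2 * h - j)) (c * (2 * h) + j)
      (by omega) (by omega) (by omega)
    rw [if_neg (by omega)]
    omega

lemma mids_bound (C : ℕ → ℕ) (m : ℕ) (hC : ∀ i < m, 2 ≤ C (2 * i) + C (2 * i + 1)) :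
    2 * m ≤ ∑ c ∈ Finset.range (2 * m), C c := by
  induction m with
  | zero => simp
  | succ m ih =>
    have h1 := ih (fun i hi => hC i (by omega))
    have h2 := hC m (by omega)
    rw [show 2 * (m + 1) = 2 * m + 1 + 1 by ring, Finset.sum_range_succ, Finset.sum_range_succ]
    omega

/-- For even chunk size `k` dividing `n`, every bichromatic travelling salesman
tour of the `2n` chunked equidistant points on the circle has total length at
least `n·k + 2n + 2n/k`. -/
theorem tsp_chunked_circle_even_lower
    (n k : ℕ) (hn : 1 ≤ n) (hk : 1 ≤ k) (hdvd : k ∣ n) (hke : Even k) :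
    ∀ v : Fin (2 * n) → Fin (2 * n), IsBichromaticTour n k v →
      n * k + 2 * n + 2 * n / k ≤ tourLength n v := by
  intro v hv
  obtain ⟨h, rfl⟩ := hke.exists_two_nsmul
  simp only [smul_eq_mul] at *
  obtain ⟨m, hm⟩ := hdvd
  have hN : 2 * n = 2 * m * (2 * h) := by rw [hm]; ring
  have hdivN : 2 * n / (2 * h) = 2 * m := by
    rw [hN]; exact Nat.mul_div_cancel _ (by omega)
  have hlen := tourLength_ge n v
  have hle : ∀ c, c < 2 * m → c * (2 * h) + 2 * h ≤ 2 * n := by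
    intro c hc
    rw [hN, ← Nat.succ_mul]
    exact Nat.mul_le_mul_right _ hc
  have hmid := mids_bound (fun c => tourCov n v (c * (2 * h) + h)) m (by
    intro i hi
    have h1 := hle (2 * i + 1) (by omega)
    have h2 : (2 * i + 1) * (2 * h) = 2 * i * (2 * h) + 2 * h := by ring
    exact tourCov_pair n v hv.1 _ _ (by omega) (by omega) (by omega))
  have hch := Finset.sum_le_sum (s := Finset.range (2 * m)) (fun c hc =>
    chunk_bound n h (by omega) v hv c (hle c (Finset.mem_range.1 hc)))
  rw [Finset.sum_add_distrib, Finset.sum_add_distrib, ← Finset.mul_sum, Finset.sum_const,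
    Finset.card_range, smul_eq_mul, ← sum_chunks (tourCov n v)] at hch
  have hs := sum_chunks (fun g => tourCov n v (g + 1)) (2 * m) (2 * h)
  rw [← hs, ← hN] at hch
  have hw : tourCov n v (2 * n) = tourCov n v 0 :=
    Finset.sum_congr rfl (fun i _ => covG_wrap _ _ _ (v i).2 (v (nextIdx i)).2)
  have hshift : ∑ g ∈ Finset.range (2 * n), tourCov n v (g + 1) =
      ∑ g ∈ Finset.range (2 * n), tourCov n v g := by
    have a1 := Finset.sum_range_succ (tourCov n v) (2 * n)
    have a2 := Finset.sum_range_succ' (tourCov n v) (2 * n)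
    omega
  rw [hshift] at hch
  rw [hdivN]
  have hnk : n * (2 * h) = m * (4 * (h * h)) := by rw [hm]; ring
  have h5 : 4 * (2 * m * (h * h)) = 2 * (m * (4 * (h * h))) := by ring
  rw [hnk]
  rw [h5, ← Finset.mul_sum] at hch
  omega
end

section
/- Let k be odd with k ∣ n. Then there exists a bichromatic travelling salesman tour of the 2n chunked equidistant points on the circle whose total length is exactly n·k + 2n + n/k (that is, n(k + 2 + 1/k)). -/
/-- offset within a chunk path -/
def tourOff (h s : ℕ) : ℕ := if s % 2 = 0 then h + s / 2 else 2 * h + 1 + s / 2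

/-- the (unreduced) position of the `t`-th point of the tour -/
def tourPos (h t : ℕ) : ℕ :=
  (2 * h + 1) * (t / (2 * h + 1)) + tourOff h (t % (2 * h + 1))

lemma tourPos_eq (h c s : ℕ) (hs : s ≤ 2 * h + 1) :
    tourPos h ((2 * h + 1) * c + s) = (2 * h + 1) * c + tourOff h s := by
  rcases Nat.lt_or_eq_of_le hs with hs | hs
  · unfold tourPos
    rw [Nat.mul_add_div (by omega), Nat.mul_add_mod, Nat.div_eq_of_lt hs, Nat.mod_eq_of_lt hs]
    simp
  · subst hs
    have : (2 * h + 1) * c + (2 * h + 1) = (2 * h + 1) * (c + 1) := by ring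
    unfold tourPos
    rw [this, Nat.mul_div_cancel_left _ (by omega), Nat.mul_mod_right]
    have e : tourOff h (2 * h + 1) = 2 * h + 1 + h := by
      unfold tourOff
      rw [if_neg (by omega)]
      omega
    have e0 : tourOff h 0 = h := by simp [tourOff]
    rw [e, e0]
    ring

lemma tourPos_wrap (h m i : ℕ) (hi : i < (2 * h + 1) * (2 * m)) :
    tourPos h ((i + 1) % ((2 * h + 1) * (2 * m))) % ((2 * h + 1) * (2 * m))
      = tourPos h (i + 1) % ((2 * h + 1) * (2 * m)) := by
  rcases Nat.lt_or_eq_of_le (Nat.succ_le_of_lt hi) with h1 | h1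
  · rw [Nat.mod_eq_of_lt (a := i + 1) h1]
  · have h1 : i + 1 = (2 * h + 1) * (2 * m) := h1
    rw [h1, Nat.mod_self]
    have a := tourPos_eq h 0 0 (by omega)
    have b := tourPos_eq h (2 * m) 0 (by omega)
    simp only [Nat.mul_zero, Nat.add_zero, Nat.zero_add] at a b
    rw [a, b]
    simp

lemma tour_color (k m x : ℕ) : (x % (k * (2 * m))) / k % 2 = x / k % 2 := by
  rw [Nat.mod_mul_right_div_self, Nat.mod_mod_of_dvd _ (Dvd.intro _ rfl)]

lemma tour_dist (N n x d : ℕ) (hN : N = 2 * n) (hn : 1 ≤ n) (hd : d ≤ n) :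
    min (((x + d) % N + N - x % N) % N) ((x % N + N - (x + d) % N) % N) = d := by
  have hr : x % N < N := Nat.mod_lt _ (by omega)
  have e : (x + d) % N = (x % N + d) % N := by simp
  rw [e]
  generalize x % N = r at *
  rcases Nat.lt_or_ge (r + d) N with h1 | h1
  · rw [Nat.mod_eq_of_lt h1]
    have : r + d + N - r = d + N := by omega
    rw [this, Nat.add_mod_right, Nat.mod_eq_of_lt (a := d) (by omega)]
    rcases Nat.eq_zero_or_pos d with h0 | h0
    · subst h0; simp
    · rw [Nat.mod_eq_of_lt (by omega)]; omega
  · have e2 : (r + d) % N = r + d - N := by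
      rw [Nat.mod_eq_sub_mod h1, Nat.mod_eq_of_lt (by omega)]
    rw [e2, show r + d - N + N - r = d by omega, Nat.mod_eq_of_lt (a := d) (by omega)]
    have : r + N - (r + d - N) = (N - d) + N := by omega
    rw [this, Nat.add_mod_right, Nat.mod_eq_of_lt (by omega)]
    omega

lemma tour_sum_chunk (A B h : ℕ) :
    ∑ x ∈ Finset.range (2 * h + 1), (if x % 2 = 0 then A else B) = (h + 1) * A + h * B := by
  induction h with
  | zero => simp
  | succ h ih =>
    rw [show 2 * (h + 1) + 1 = (2 * h + 1) + 1 + 1 by ring, Finset.sum_range_succ,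
      Finset.sum_range_succ, ih, if_neg (by omega), if_pos (by omega)]
    ring

lemma tour_sum (k a : ℕ) (g : ℕ → ℕ) :
    ∑ x ∈ Finset.range (k * a), g (x % k) = a * ∑ x ∈ Finset.range k, g x := by
  induction a with
  | zero => simp
  | succ a ih =>
    rw [Nat.mul_succ, Finset.sum_range_add, ih, Nat.succ_mul]
    congr 1
    apply Finset.sum_congr rfl
    intro x hx
    rw [Nat.mul_add_mod, Nat.mod_eq_of_lt (Finset.mem_range.mp hx)]

/-- For odd chunk size `k` dividing `n`, there is a bichromatic travelling
salesman tour of the `2n` chunked equidistant points on the circle of total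
length exactly `n·k + 2n + n/k`. -/
theorem tsp_chunked_circle_odd_upper
    (n k : ℕ) (hn : 1 ≤ n) (hk : 1 ≤ k) (hdvd : k ∣ n) (hko : Odd k) :
    ∃ v : Fin (2 * n) → Fin (2 * n), IsBichromaticTour n k v ∧
      tourLength n v = n * k + 2 * n + n / k := by
  obtain ⟨h, rfl⟩ := hko
  obtain ⟨m, hm⟩ := hdvd
  have hm1 : 1 ≤ m := by
    rcases Nat.eq_zero_or_pos m with h0 | h0
    · subst h0; simp at hm; omega
    · exact h0
  have hN : 2 * n = (2 * h + 1) * (2 * m) := by rw [hm]; ring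
  have hkn : 2 * h + 1 ≤ n := by rw [hm]; exact Nat.le_mul_of_pos_right _ hm1
  let v : Fin (2 * n) → Fin (2 * n) := fun i =>
    ⟨tourPos h i.val % (2 * n), Nat.mod_lt _ (by omega)⟩
  have hv : ∀ i, (v i).val = tourPos h i.val % (2 * n) := fun i => rfl
  have hv' : ∀ i, (v (nextIdx i)).val = tourPos h (i.val + 1) % (2 * n) := by
    intro i
    have := tourPos_wrap h m i.val (by rw [← hN]; exact i.isLt)
    rw [← hN] at this
    exact this
  have hdec : ∀ i : ℕ, ∃ c s, s < 2 * h + 1 ∧ i % (2 * h + 1) = s ∧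
      tourPos h i = (2 * h + 1) * c + tourOff h s ∧
      tourPos h (i + 1) = (2 * h + 1) * c + tourOff h (s + 1) := by
    intro i
    have hs : i % (2 * h + 1) < 2 * h + 1 := Nat.mod_lt _ (by omega)
    refine ⟨i / (2 * h + 1), i % (2 * h + 1), hs, rfl, ?_, ?_⟩
    · rw [← tourPos_eq h _ _ hs.le, Nat.div_add_mod]
    · rw [← tourPos_eq h _ (i % (2 * h + 1) + 1) hs, ← Nat.add_assoc, Nat.div_add_mod]
  refine ⟨v, ⟨?_, ?_⟩, ?_⟩
  · apply Function.Surjective.bijective_of_finite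
    intro p
    have hp := p.isLt
    have hr : p.val % (2 * h + 1) < 2 * h + 1 := Nat.mod_lt _ (by omega)
    have hpe := Nat.div_add_mod p.val (2 * h + 1)
    have hc : p.val / (2 * h + 1) < 2 * m := by
      apply Nat.div_lt_of_lt_mul
      rw [← hN]; exact hp
    generalize p.val / (2 * h + 1) = c at *
    generalize p.val % (2 * h + 1) = r at *
    have key : ∀ c' s, c' < 2 * m → s < 2 * h + 1 →
        ((2 * h + 1) * c' + tourOff h s) % (2 * n) = p.val → ∃ a, v a = p := by
      intro c' s hc' hs he
      refine ⟨⟨(2 * h + 1) * c' + s, ?_⟩, ?_⟩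
      · rw [hN]
        calc (2 * h + 1) * c' + s < (2 * h + 1) * (c' + 1) := by rw [Nat.mul_succ]; omega
          _ ≤ _ := Nat.mul_le_mul_left _ hc'
      · apply Fin.ext
        rw [hv, ← he, ← tourPos_eq h c' s hs.le]
    rcases Nat.lt_or_ge r h with h1 | h1
    · have e : tourOff h (2 * r + 1) = 2 * h + 1 + r := by
        unfold tourOff
        rw [if_neg (by omega)]
        omega
      rcases c with _ | c
      · apply key (2 * m - 1) (2 * r + 1) (by omega) (by omega)
        rw [e, ← Nat.add_assoc, ← Nat.mul_succ, show (2 * m - 1).succ = 2 * m by omega, ← hN,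
          Nat.add_mod_left, Nat.mod_eq_of_lt (by omega)]
        omega
      · apply key c (2 * r + 1) (by omega) (by omega)
        rw [e, ← Nat.add_assoc, ← Nat.mul_succ, Nat.succ_eq_add_one, hpe, Nat.mod_eq_of_lt hp]
    · have e : tourOff h (2 * (r - h)) = r := by
        unfold tourOff
        rw [if_pos (by omega)]
        omega
      apply key c (2 * (r - h)) hc (by omega)
      rw [e, hpe, Nat.mod_eq_of_lt hp]
  · intro i
    obtain ⟨c, s, hs, -, e1, e2⟩ := hdec i.val
    have d1 : ∀ s, s ≤ 2 * h + 1 → tourOff h s / (2 * h + 1) = s % 2 := by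
      intro s hs
      unfold tourOff
      split_ifs with h2
      · rw [h2]; exact Nat.div_eq_of_lt (by omega)
      · rw [Nat.add_div_left _ (by omega), Nat.div_eq_of_lt (by omega)]; omega
    unfold redPt
    have hcol : ∀ x : ℕ, x % (2 * n) / (2 * h + 1) % 2 = x / (2 * h + 1) % 2 := by
      intro x
      rw [hN, tour_color]
    rw [hv', hv, hcol, hcol, e1, e2, Nat.mul_add_div (by omega),
      Nat.mul_add_div (by omega), d1 _ hs.le, d1 _ hs]
    intro hh
    rw [decide_eq_decide] at hh
    omega
  · have hedge : ∀ i : Fin (2 * n), edgeLen n (v i) (v (nextIdx i)) =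
        (fun x => if x % 2 = 0 then h + 2 else h + 1) (i.val % (2 * h + 1)) := by
      intro i
      obtain ⟨c, s, hs, e0, e1, e2⟩ := hdec i.val
      unfold edgeLen
      rw [hv', hv, e0]
      rcases Nat.mod_two_eq_zero_or_one s with h2 | h2
      · have : tourPos h (i.val + 1) = tourPos h i.val + (h + 1) := by
          rw [e1, e2]; unfold tourOff
          rw [if_pos h2, if_neg (by omega)]; omega
        rw [this, tour_dist (2 * n) n _ (h + 1) rfl hn (by omega)]
        simp [h2]
      · have : tourPos h i.val = tourPos h (i.val + 1) + h := by
          rw [e1, e2]; unfold tourOff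
          rw [if_neg (by omega), if_pos (by omega)]; omega
        rw [this, min_comm, tour_dist (2 * n) n _ h rfl hn (by omega)]
        simp [h2]
    unfold tourLength
    rw [Finset.sum_congr rfl (fun i _ => hedge i),
      Fin.sum_univ_eq_sum_range (fun j => (fun x => if x % 2 = 0 then h + 2 else h + 1)
        (j % (2 * h + 1))) (2 * n), hN,
      tour_sum (2 * h + 1) (2 * m) (fun x => if x % 2 = 0 then h + 2 else h + 1), tour_sum_chunk, hm,
      Nat.mul_div_cancel_left _ (by omega)]
    ring
end

section
/- Let k be even with k ∣ n, and fix a red chunk C_j = { i ∈ Fin (2n) : ⌊i/k⌋ = 2j } for some j < n/k. Then for every bichromatic travelling salesman tour of the 2n chunked equidistant points on the circle, the sum of the lengths of the tour edges having an endpoint in C_j is at least k² + 2k + 2. -/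
/-- Position relative to the start `s` of the red chunk. -/
def relPos (n s : ℕ) (x : ℕ) : ℕ := if s ≤ x then x - s else x + 2 * n - s

/-- Dual weight (doubled), as a function of the relative position. -/
def dualW (n m : ℕ) (u : ℕ) : ℤ :=
  if u < m then 2 * u + 2 * m + 3
  else if u < 2 * m then 2 * (2 * m - 1 - u) + 2 * m + 3
  else if u < 3 * m then 2 * (u - 2 * m) - (2 * m - 1)
  else if 2 * n - m ≤ u then 2 * (2 * n - 1 - u) - (2 * m - 1)
  else 0

/-- Left near set. -/
def leftS (n m : ℕ) (u : ℕ) : Prop := u < m ∨ 2 * n - m ≤ u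

/-- Right near set. -/
def rightS (m : ℕ) (u : ℕ) : Prop := m ≤ u ∧ u < 3 * m

open Classical in
/-- Cut indicator. -/
noncomputable def cutI (P Q : Prop) : ℤ := if (P ↔ Q) then 0 else 1

lemma sum_range_two_mul (m : ℕ) (c : ℤ) :
    ∑ i ∈ Finset.range m, (2 * (i : ℤ) + c) = m * (m - 1) + c * m := by
  induction m with
  | zero => simp
  | succ m ih => rw [Finset.sum_range_succ, ih]; push_cast; ring

lemma sum_range_two_mul_rev (m : ℕ) (c : ℤ) :
    ∑ i ∈ Finset.range m, (2 * ((m : ℤ) - 1 - i) + c) = m * (m - 1) + c * m := by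
  rw [← sum_range_two_mul m c, ← Finset.sum_range_reflect]
  refine Finset.sum_congr rfl fun i hi => ?_
  have := Finset.mem_range.1 hi
  have h : ((m - 1 - i : ℕ) : ℤ) = m - 1 - i := by omega
  rw [h]; ring

lemma sum_dualW (n m : ℕ) (h : 4 * m ≤ 2 * n) :
    ∑ u ∈ Finset.range (2 * n), dualW n m u = 4 * (m : ℤ) ^ 2 + 4 * m := by
  obtain ⟨r, hr⟩ := Nat.exists_eq_add_of_le h
  have e : 2 * n = m + m + m + r + m := by omega
  have e' : (2 * n : ℤ) = m + m + m + r + m := by exact_mod_cast e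
  conv_lhs => rw [e]
  rw [Finset.sum_range_add, Finset.sum_range_add, Finset.sum_range_add, Finset.sum_range_add]
  have h1 : ∑ x ∈ Finset.range m, dualW n m x = m * (m - 1) + (2 * m + 3) * m := by
    rw [← sum_range_two_mul m]
    refine Finset.sum_congr rfl fun i hi => ?_
    have := Finset.mem_range.1 hi
    unfold dualW; split_ifs <;> omega
  have h2 : ∑ x ∈ Finset.range m, dualW n m (m + x) = m * (m - 1) + (2 * m + 3) * m := by
    rw [← sum_range_two_mul_rev m]
    refine Finset.sum_congr rfl fun i hi => ?_
    have := Finset.mem_range.1 hi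
    unfold dualW; split_ifs <;> omega
  have h3 : ∑ x ∈ Finset.range m, dualW n m (m + m + x) = m * (m - 1) + (1 - 2 * m) * m := by
    rw [← sum_range_two_mul m]
    refine Finset.sum_congr rfl fun i hi => ?_
    have := Finset.mem_range.1 hi
    unfold dualW; split_ifs <;> omega
  have h4 : ∑ x ∈ Finset.range r, dualW n m (m + m + m + x) = 0 := by
    refine Finset.sum_eq_zero fun i hi => ?_
    have := Finset.mem_range.1 hi
    unfold dualW; split_ifs <;> omega
  have h5 : ∑ x ∈ Finset.range m, dualW n m (m + m + m + r + x)
      = m * (m - 1) + (1 - 2 * m) * m := by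
    rw [← sum_range_two_mul_rev m]
    refine Finset.sum_congr rfl fun i hi => ?_
    have := Finset.mem_range.1 hi
    unfold dualW; split_ifs <;> omega
  rw [h1, h2, h3, h4, h5]; ring

lemma relPos_lt (n s x : ℕ) (hs : s < 2 * n) (hx : x < 2 * n) : relPos n s x < 2 * n := by
  unfold relPos; split_ifs <;> omega

lemma edgeLen_rel (n s : ℕ) (hs : s < 2 * n) (x y : Fin (2 * n)) (hne : x ≠ y) :
    edgeLen n x y = min (relPos n s x - relPos n s y + (relPos n s y - relPos n s x))
      (2 * n - (relPos n s x - relPos n s y + (relPos n s y - relPos n s x))) + 1 := by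
  have hx := x.2
  have hy := y.2
  have hne' : (x : ℕ) ≠ y := fun h => hne (Fin.ext h)
  unfold edgeLen
  rcases Nat.lt_or_gt_of_ne hne' with h | h
  · have e1 : ((y : ℕ) + 2 * n - x) % (2 * n) = y - x := by
      rw [show (y : ℕ) + 2 * n - x = (y - x) + 2 * n by omega, Nat.add_mod_right,
        Nat.mod_eq_of_lt (by omega)]
    have e2 : ((x : ℕ) + 2 * n - y) % (2 * n) = x + 2 * n - y := Nat.mod_eq_of_lt (by omega)
    rw [e1, e2]; unfold relPos; split_ifs <;> omega
  · have e1 : ((x : ℕ) + 2 * n - y) % (2 * n) = x - y := by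
      rw [show (x : ℕ) + 2 * n - y = (x - y) + 2 * n by omega, Nat.add_mod_right,
        Nat.mod_eq_of_lt (by omega)]
    have e2 : ((y : ℕ) + 2 * n - x) % (2 * n) = y + 2 * n - x := Nat.mod_eq_of_lt (by omega)
    rw [e1, e2]; unfold relPos; split_ifs <;> omega

lemma cutI_comm (P Q : Prop) : cutI P Q = cutI Q P := by
  have h : (P ↔ Q) = (Q ↔ P) := propext iff_comm
  unfold cutI; by_cases h1 : (P ↔ Q)
  · rw [if_pos h1, if_pos (h ▸ h1)]
  · rw [if_neg h1, if_neg (h ▸ h1)]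

/-- Edge inequality for an edge from the red chunk to a point outside. -/
lemma edge_in (n m a b : ℕ) (h : 4 * m ≤ 2 * n) (ha : a < 2 * m) (hb : 2 * m ≤ b)
    (hb' : b < 2 * n) :
    dualW n m a + dualW n m b + cutI (leftS n m a) (leftS n m b) + cutI (rightS m a) (rightS m b)
      ≤ 2 * ((min (a - b + (b - a)) (2 * n - (a - b + (b - a))) + 1 : ℕ) : ℤ) := by
  have e : a - b + (b - a) = b - a := by omega
  rw [e]
  unfold cutI leftS rightS dualW
  rcases Nat.lt_or_ge a m with h1 | h1 <;> rcases Nat.lt_or_ge b (3 * m) with h2 | h2 <;>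
  rcases Nat.lt_or_ge b (2 * n - m) with h3 | h3 <;>
  split_ifs <;> omega

lemma edge_out (n m a b : ℕ) (h : 4 * m ≤ 2 * n) (ha : 4 * m ≤ a) (ha' : a < 2 * n - 2 * m)
    (hb : 2 * m ≤ b) (hb' : b < 2 * n) :
    dualW n m a + dualW n m b + cutI (leftS n m a) (leftS n m b) + cutI (rightS m a) (rightS m b)
      ≤ 0 := by
  unfold cutI leftS rightS dualW
  rcases Nat.lt_or_ge b (3 * m) with h2 | h2 <;>
  rcases Nat.lt_or_ge b (2 * n - m) with h3 | h3 <;>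
  split_ifs <;> omega

lemma rel_in (n k j x : ℕ) (hk : 1 ≤ k) (hq : x / k = 2 * j) :
    relPos n (2 * j * k) x < k := by
  have h1 := Nat.div_mul_le_self x k
  have h2 := Nat.lt_div_mul_add (a := x) hk
  rw [hq] at h1 h2
  unfold relPos; split_ifs; omega

lemma rel_notin (n k j x : ℕ) (hk : 1 ≤ k) (hx : x < 2 * n) (hs : 2 * j * k + k ≤ 2 * n)
    (hq : x / k ≠ 2 * j) :
    k ≤ relPos n (2 * j * k) x := by
  have h1 := Nat.div_mul_le_self x k
  have h2 := Nat.lt_div_mul_add (a := x) hk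
  rcases Nat.lt_or_gt_of_ne hq with h | h
  · have := Nat.mul_le_mul_right k (show x / k + 1 ≤ 2 * j from h)
    rw [add_mul] at this
    unfold relPos; split_ifs <;> omega
  · have := Nat.mul_le_mul_right k (show 2 * j + 1 ≤ x / k from h)
    rw [add_mul] at this
    unfold relPos; split_ifs <;> omega

lemma rel_red (n k c j x : ℕ) (hk : 1 ≤ k) (hn : n = k * c) (hj : j < c) (hx : x < 2 * n)
    (hq : x / k ≠ 2 * j) (hr : x / k % 2 = 0) :
    2 * k ≤ relPos n (2 * j * k) x ∧ relPos n (2 * j * k) x < 2 * n - k := by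
  have h1 := Nat.div_mul_le_self x k
  have h2 := Nat.lt_div_mul_add (a := x) hk
  have h3 : x / k < 2 * c := by
    rw [Nat.div_lt_iff_lt_mul hk]; rw [hn] at hx; linarith
  have h4 := Nat.mul_le_mul_right k (show x / k + 2 ≤ 2 * c by omega)
  have h5 := Nat.mul_le_mul_right k (show 2 * j + 2 ≤ 2 * c by omega)
  have h6 : 2 * c * k = 2 * n := by rw [hn]; ring
  rw [add_mul] at h4 h5
  rcases Nat.lt_or_gt_of_ne hq with h | h
  · have := Nat.mul_le_mul_right k (show x / k + 2 ≤ 2 * j by omega)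
    rw [add_mul] at this
    unfold relPos; split_ifs <;> omega
  · have := Nat.mul_le_mul_right k (show 2 * j + 2 ≤ x / k by omega)
    rw [add_mul] at this
    unfold relPos; split_ifs <;> omega

lemma nextIdx_bij {N : ℕ} : Function.Bijective (nextIdx : Fin N → Fin N) := by
  rw [← Finite.injective_iff_bijective]
  intro a b h
  have ha := a.2
  have hb := b.2
  have h' : (a.val + 1) % N = (b.val + 1) % N := congrArg Fin.val h
  have hh : a.val ≡ b.val [MOD N] := Nat.ModEq.add_right_cancel' 1 h'
  exact Fin.ext (Nat.ModEq.eq_of_lt_of_lt hh ha hb)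

lemma exists_exit {N : ℕ} (P : Fin N → Prop) (a b : Fin N) (ha : P a) (hb : ¬ P b) :
    ∃ i, P i ∧ ¬ P (nextIdx i) := by
  by_contra hcon
  push Not at hcon
  have key : ∀ t : ℕ, P ⟨(a.val + t) % N, Nat.mod_lt _ a.pos⟩ := by
    intro t
    induction t with
    | zero =>
      have : (⟨(a.val + 0) % N, Nat.mod_lt _ a.pos⟩ : Fin N) = a :=
        Fin.ext (Nat.mod_eq_of_lt a.2)
      rwa [this]
    | succ t ih =>
      have := hcon _ ih
      have e : nextIdx (⟨(a.val + t) % N, Nat.mod_lt _ a.pos⟩ : Fin N)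
          = ⟨(a.val + (t + 1)) % N, Nat.mod_lt _ a.pos⟩ := by
        apply Fin.ext
        simp [nextIdx, add_assoc]
      rwa [e] at this
  apply hb
  have h := key (b.val + N - a.val)
  have ha2 := a.2
  have e : (⟨(a.val + (b.val + N - a.val)) % N, Nat.mod_lt _ a.pos⟩ : Fin N) = b := by
    apply Fin.ext
    show (a.val + (b.val + N - a.val)) % N = b.val
    rw [show a.val + (b.val + N - a.val) = b.val + N by omega, Nat.add_mod_right,
      Nat.mod_eq_of_lt b.2]
  rwa [e] at h

lemma cut_ge_two {N : ℕ} (P : Fin N → Prop) (a b : Fin N) (ha : P a) (hb : ¬ P b) :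
    2 ≤ ∑ i, cutI (P i) (P (nextIdx i)) := by
  obtain ⟨i, hi, hi'⟩ := exists_exit P a b ha hb
  obtain ⟨l, hl, hl'⟩ := exists_exit (fun x => ¬ P x) b a hb (by simpa using ha)
  have hne : i ≠ l := fun h => hl (h ▸ hi)
  have h1 : ∑ x ∈ ({i, l} : Finset (Fin N)), cutI (P x) (P (nextIdx x)) = 2 := by
    rw [Finset.sum_pair hne]
    simp only [not_not] at hl'
    simp [cutI, hi, hi', hl, hl']
  rw [← h1]
  apply Finset.sum_le_sum_of_subset_of_nonneg (Finset.subset_univ _)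
  intro x _ _
  unfold cutI; split_ifs <;> simp

/-- The vertex weight sum along the tour. -/
lemma sum_weights (n m s : ℕ) (hs : s < 2 * n) (h : 4 * m ≤ 2 * n) :
    ∑ x : Fin (2 * n), dualW n m (relPos n s x) = 4 * (m : ℤ) ^ 2 + 4 * m := by
  rw [← sum_dualW n m h, ← Fin.sum_univ_eq_sum_range]
  let U : Fin (2 * n) → Fin (2 * n) := fun x => ⟨relPos n s x, relPos_lt n s x hs x.2⟩
  have hU : Function.Bijective U := by
    rw [← Finite.injective_iff_bijective]
    intro a b hab
    have h' : relPos n s a = relPos n s b := congrArg Fin.val hab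
    have := a.2
    have := b.2
    apply Fin.ext
    unfold relPos at h'
    split_ifs at h' <;> omega
  exact hU.sum_comp (fun x : Fin (2 * n) => dualW n m x)

/-- For even chunk size `k` dividing `n` and any fixed red chunk
`C_j = { i : ⌊i/k⌋ = 2j }` with `j < n/k`, in every bichromatic travelling
salesman tour the total length of the tour edges with an endpoint in `C_j`
is at least `k² + 2k + 2`. -/
theorem tsp_chunked_circle_red_chunk_lower
    (n k : ℕ) (hn : 1 ≤ n) (hk : 1 ≤ k) (hdvd : k ∣ n) (hke : Even k)
    (j : ℕ) (hj : j < n / k)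
    (v : Fin (2 * n) → Fin (2 * n)) (hv : IsBichromaticTour n k v) :
    k ^ 2 + 2 * k + 2 ≤
      ∑ i ∈ Finset.univ.filter
          (fun i : Fin (2 * n) =>
            ((v i : ℕ)) / k = 2 * j ∨ ((v (nextIdx i) : ℕ)) / k = 2 * j),
        edgeLen n (v i) (v (nextIdx i)) := by
  classical
  obtain ⟨m, hm⟩ := hke
  obtain ⟨c, hc⟩ := hdvd
  have hjc : j < c := by
    rwa [hc, Nat.mul_div_cancel_left _ hk] at hj
  obtain ⟨hbij, hcol⟩ := hv
  have h6 : 2 * c * k = 2 * n := by rw [hc]; ring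
  have h5 := Nat.mul_le_mul_right k (show 2 * j + 2 ≤ 2 * c by omega)
  rw [add_mul, h6] at h5
  have h4m : 4 * m ≤ 2 * n := by omega
  have hs : 2 * j * k < 2 * n := by omega
  set s := 2 * j * k with hsdef
  let f : Fin (2 * n) → ℕ := fun x => relPos n s (v x)
  have hcut : ∀ P : ℕ → Prop, (∃ t < 2 * n, P t) → (∃ t < 2 * n, ¬ P t) →
      2 ≤ ∑ i, cutI (P (f i)) (P (f (nextIdx i))) := by
    have hsurj : ∀ t < 2 * n, ∃ i, f i = t := by
      intro t ht
      by_cases h : t + s < 2 * n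
      · obtain ⟨i, hi⟩ := hbij.2 ⟨t + s, h⟩
        refine ⟨i, ?_⟩
        simp only [f, hi, relPos]
        split_ifs <;> omega
      · obtain ⟨i, hi⟩ := hbij.2 ⟨t + s - 2 * n, by omega⟩
        refine ⟨i, ?_⟩
        simp only [f, hi, relPos]
        split_ifs <;> omega
    rintro P ⟨t, ht, hPt⟩ ⟨t', ht', hPt'⟩
    obtain ⟨a, ha⟩ := hsurj t ht
    obtain ⟨b, hb⟩ := hsurj t' ht'
    exact cut_ge_two (fun i => P (f i)) a b (by simpa [ha] using hPt) (by simpa [hb] using hPt')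
  have hL := hcut (leftS n m) ⟨0, by omega, Or.inl (by omega)⟩
    ⟨m, by omega, by unfold leftS; omega⟩
  have hR := hcut (rightS m) ⟨m, by omega, by unfold rightS; omega⟩
    ⟨0, by omega, by unfold rightS; omega⟩
  have hw1 : ∑ i, dualW n m (f i) = 4 * (m : ℤ) ^ 2 + 4 * m := by
    rw [← sum_weights n m s hs h4m]
    exact hbij.sum_comp (fun x : Fin (2 * n) => dualW n m (relPos n s x))
  have hw2 : ∑ i, dualW n m (f (nextIdx i)) = 4 * (m : ℤ) ^ 2 + 4 * m := by
    rw [← hw1]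
    exact nextIdx_bij.sum_comp (fun i => dualW n m (f i))
  -- edge inequality with the red endpoint first
  have hedge : ∀ x y : Fin (2 * n), (x : ℕ) / k % 2 = 0 → (y : ℕ) / k % 2 ≠ 0 →
      dualW n m (relPos n s x) + dualW n m (relPos n s y)
        + cutI (leftS n m (relPos n s x)) (leftS n m (relPos n s y))
        + cutI (rightS m (relPos n s x)) (rightS m (relPos n s y))
      ≤ 2 * ((if (x : ℕ) / k = 2 * j ∨ (y : ℕ) / k = 2 * j then edgeLen n x y else 0 : ℕ) : ℤ) := by
    intro x y hx hy
    have hyj : (y : ℕ) / k ≠ 2 * j := by omega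
    have hy1 := rel_notin n k j y hk y.2 (by omega) hyj
    rw [← hsdef] at hy1
    have hy2 := relPos_lt n s y hs y.2
    by_cases hxj : (x : ℕ) / k = 2 * j
    · have hx1 := rel_in n k j x hk hxj
      rw [← hsdef] at hx1
      rw [if_pos (Or.inl hxj), edgeLen_rel n s hs x y (by rintro rfl; exact hyj hxj)]
      exact edge_in n m _ _ h4m (by omega) (by omega) hy2
    · have hx1 := rel_red n k c j x hk hc hjc x.2 hxj hx
      rw [← hsdef] at hx1
      rw [if_neg (by tauto)]
      have := edge_out n m (relPos n s x) (relPos n s y) h4m (by omega) (by omega) (by omega) hy2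
      simpa using this
  have hcomm : ∀ x y : Fin (2 * n), edgeLen n x y = edgeLen n y x := by
    intro x y; unfold edgeLen; rw [min_comm]
  have hall : ∀ i : Fin (2 * n),
      dualW n m (f i) + dualW n m (f (nextIdx i))
        + cutI (leftS n m (f i)) (leftS n m (f (nextIdx i)))
        + cutI (rightS m (f i)) (rightS m (f (nextIdx i)))
      ≤ 2 * ((if (v i : ℕ) / k = 2 * j ∨ (v (nextIdx i) : ℕ) / k = 2 * j
          then edgeLen n (v i) (v (nextIdx i)) else 0 : ℕ) : ℤ) := by
    intro i
    have hc' := hcol i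
    unfold redPt at hc'
    by_cases h : (v i : ℕ) / k % 2 = 0
    · refine hedge _ _ h fun h' => hc' (by simp [h, h'])
    · have h' : (v (nextIdx i) : ℕ) / k % 2 = 0 := by
        by_contra h'
        exact hc' (by simp [h, h'])
      have := hedge _ _ h' h
      rw [hcomm, cutI_comm (leftS n m _), cutI_comm (rightS m _)] at this
      simp only [or_comm (a := (v (nextIdx i) : ℕ) / k = 2 * j)] at this
      rw [add_comm (dualW n m (f i))]
      exact this
  have hsum := Finset.sum_le_sum fun i (_ : i ∈ Finset.univ) => hall i
  rw [Finset.sum_add_distrib, Finset.sum_add_distrib, Finset.sum_add_distrib, hw1, hw2,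
    ← Finset.mul_sum, ← Nat.cast_sum, ← Finset.sum_filter] at hsum
  have hkz : (k : ℤ) = m + m := by exact_mod_cast hm
  have hfin : ((k ^ 2 + 2 * k + 2 : ℕ) : ℤ) ≤ ((∑ i ∈ Finset.univ.filter
          (fun i : Fin (2 * n) =>
            ((v i : ℕ)) / k = 2 * j ∨ ((v (nextIdx i) : ℕ)) / k = 2 * j),
        edgeLen n (v i) (v (nextIdx i)) : ℕ) : ℤ) := by
    rw [Nat.cast_add, Nat.cast_add, Nat.cast_pow, Nat.cast_mul, hkz]
    norm_num only [Nat.cast_ofNat]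
    nlinarith [hsum, hL, hR]
  exact_mod_cast hfin
end
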